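/- There exists a residual subset R of the metric space (F_(C,β), d_α) (i.e., a set containing a countable intersection of open dense subsets) such that for every f ∈ R, for μ̂-almost every y ∈ [0,1] the conditional measure μ_y of the Rokhlin disintegration is a Dirac measure: there exists x_y ∈ [0,1] such that μ_y = δ_{(x_y, f(x_y, y))}. -/

import Mathlib

open MeasureTheory Set Filter Topology
open scoped ENNReal

noncomputable section

/-- The unit square `M = [0,1]²`. -/
def MSq : Set (ℝ × ℝ) := unitInterval ×ˢ unitInterval

/-- Lower `(C,γ)`-bi-Hölder bound in the second variable. -/
def BiHolderLower (C γ : ℝ) (f : ℝ → ℝ → ℝ) : Prop :=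
  ∀ x ∈ unitInterval, ∀ y₁ ∈ unitInterval, ∀ y₂ ∈ unitInterval, y₁ ≠ y₂ →
    C⁻¹ * |y₂ - y₁| ^ (1 / γ) ≤ |f x y₂ - f x y₁|

/-- Upper `(C,γ)`-Hölder bound in the second variable. -/
def BiHolderUpper (C γ : ℝ) (f : ℝ → ℝ → ℝ) : Prop :=
  ∀ x ∈ unitInterval, ∀ y₁ ∈ unitInterval, ∀ y₂ ∈ unitInterval, y₁ ≠ y₂ →
    |f x y₂ - f x y₁| ≤ C * |y₂ - y₁| ^ γ

/-- Membership in the space `F_(C,γ)`: conditions (i)–(iv); `fx` plays the role of `∂f/∂x`. -/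
structure IsFol (C γ : ℝ) (f fx : ℝ → ℝ → ℝ) : Prop where
  mapsTo : ∀ x ∈ unitInterval, ∀ y ∈ unitInterval, f x y ∈ unitInterval
  hasDeriv : ∀ y ∈ unitInterval, ∀ x ∈ unitInterval,
    HasDerivWithinAt (fun x' => f x' y) (fx x y) unitInterval x
  derivCont : ContinuousOn (fun p : ℝ × ℝ => fx p.1 p.2) MSq
  eq_id : ∀ y ∈ unitInterval, f 0 y = y
  eq_bot : ∀ x ∈ unitInterval, f x 0 = 0
  eq_top : ∀ x ∈ unitInterval, f x 1 = 1
  lower : BiHolderLower C γ f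
  upper : BiHolderUpper C γ f

/-- The space `F_(C,γ)`. -/
structure Fol (C γ : ℝ) where
  f : ℝ → ℝ → ℝ
  fx : ℝ → ℝ → ℝ
  isFol : IsFol C γ f fx

/-- The inverse of `y ↦ f x y` on `[0,1]`, i.e. the holonomy `h^f_{x,0}`. -/
def hinv (f : ℝ → ℝ → ℝ) (x : ℝ) : ℝ → ℝ := Function.invFunOn (f x) unitInterval

/-- The `C⁰` distance over the square. -/
def C0dist (u v : ℝ → ℝ → ℝ) : ℝ :=
  sSup {r | ∃ x ∈ unitInterval, ∃ y ∈ unitInterval, r = |u x y - v x y|}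

/-- The `α`-Hölder seminorm of the difference `h - k` on `[0,1]`. -/
def holDist (α : ℝ) (h k : ℝ → ℝ) : ℝ :=
  sSup {r | ∃ y₁ ∈ unitInterval, ∃ y₂ ∈ unitInterval, y₁ ≠ y₂ ∧
    r = |(h y₂ - k y₂) - (h y₁ - k y₁)| / |y₂ - y₁| ^ α}

/-- The distance `d_α`, on raw data `(f, ∂f/∂x)`, `(g, ∂g/∂x)`. -/
def dalpha (α : ℝ) (f fx g gx : ℝ → ℝ → ℝ) : ℝ :=
  C0dist f g + C0dist fx gx +
    sSup {r | ∃ x ∈ unitInterval,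
      r = max (holDist α (f x) (g x)) (holDist α (hinv f x) (hinv g x))}

/-- The distance `d_α` on `F_(C,γ)`. -/
def dalphaF {C γ : ℝ} (α : ℝ) (F G : Fol C γ) : ℝ := dalpha α F.f F.fx G.f G.fx

/-- Openness with respect to a distance function. -/
def IsOpenWrt {X : Type*} (d : X → X → ℝ) (s : Set X) : Prop :=
  ∀ f ∈ s, ∃ ε > 0, ∀ g, d g f < ε → g ∈ s

/-- Density with respect to a distance function. -/
def IsDenseWrt {X : Type*} (d : X → X → ℝ) (s : Set X) : Prop :=
  ∀ f : X, ∀ ε > 0, ∃ g ∈ s, d g f < ε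

/-- Lebesgue measure `μ` on the unit square `M`. -/
def muM : Measure (ℝ × ℝ) := volume.restrict MSq

/-- The projection `π_f(x,z) = f(x,·)⁻¹(z)` along the leaves. -/
def projF (f : ℝ → ℝ → ℝ) : ℝ × ℝ → ℝ := fun p => hinv f p.1 p.2

/-- The quotient measure `μ̂ = (π_f)_* μ`. -/
def quotM {C γ : ℝ} (F : Fol C γ) : Measure ℝ := muM.map (projF F.f)

/-- The leaf `L_y = {(x, f(x,y)) : x ∈ [0,1]}`. -/
def Leaf {C γ : ℝ} (F : Fol C γ) (y : ℝ) : Set (ℝ × ℝ) :=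
  (fun x => (x, F.f x y)) '' unitInterval

/-- `(ν_y)` is a Rokhlin disintegration of Lebesgue measure on the square w.r.t. `π_f`. -/
def IsDisint {C γ : ℝ} (F : Fol C γ) (ν : ℝ → Measure (ℝ × ℝ)) : Prop :=
  (∀ y, IsProbabilityMeasure (ν y)) ∧
  (∀ E : Set (ℝ × ℝ), MeasurableSet E → Measurable fun y => ν y E) ∧
  (∀ᵐ y ∂quotM F, ν y (Leaf F y) = 1) ∧
  (∀ E : Set (ℝ × ℝ), MeasurableSet E → muM E = ∫⁻ y, ν y E ∂quotM F)

/-- The element `P_i` of the partition `P_{f,n}`. -/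
def Pelt (f : ℝ → ℝ → ℝ) (n i : ℕ) : Set (ℝ × ℝ) :=
  {p | p.1 ∈ unitInterval ∧ f p.1 ((i : ℝ) / 2 ^ n) ≤ p.2 ∧ p.2 < f p.1 (((i : ℝ) + 1) / 2 ^ n)}

/-- `Ĩ = [b₁,b₂] × [0,1]`. -/
def Itilde (b₁ b₂ : ℝ) : Set (ℝ × ℝ) := Icc b₁ b₂ ×ˢ unitInterval

/-- The set `A_{n,m,I}`. -/
def Aset (C γ : ℝ) (n m : ℕ) (b₁ b₂ : ℝ) : Set (Fol C γ) :=
  {F | ∀ i < 2 ^ n,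
    muM (Pelt F.f n i ∩ Itilde b₁ b₂) / muM (Pelt F.f n i) < 1 / (m : ℝ≥0∞) ∨
    1 - 1 / (m : ℝ≥0∞) < muM (Pelt F.f n i ∩ Itilde b₁ b₂) / muM (Pelt F.f n i)}

/-- The set `B_{m,I}`. -/
def Bset (C γ : ℝ) (m : ℕ) (b₁ b₂ : ℝ) : Set (Fol C γ) := ⋃ n : ℕ, Aset C γ n m b₁ b₂

/-- The leaf measure `λ_y`: pushforward of 1-dimensional Lebesgue measure on `[0,1]`
under `x ↦ (x, f(x,y))`. -/
def leafMeas {C γ : ℝ} (F : Fol C γ) (y : ℝ) : Measure (ℝ × ℝ) :=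
  (volume.restrict unitInterval).map fun x => (x, F.f x y)


section helpers

variable {C β α : ℝ}

lemma fol_cont (hβ0 : 0 < β) {f fx : ℝ → ℝ → ℝ} (h : IsFol C β f fx) {x : ℝ}
    (hx : x ∈ unitInterval) : ContinuousOn (f x) (Icc 0 1) := by
  intro y hy
  have key : Tendsto (fun z : ℝ => C * |z - y| ^ β) (𝓝[Icc 0 1] y) (𝓝 0) := by
    have h1 : Continuous (fun z : ℝ => C * |z - y| ^ β) := by
      have : Continuous (fun z : ℝ => |z - y| ^ β) :=
        (continuous_id.sub continuous_const).abs.rpow_const (fun _ => Or.inr hβ0.le)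
      exact continuous_const.mul this
    have h2 := (h1.tendsto y).mono_left (nhdsWithin_le_nhds (s := Icc (0:ℝ) 1))
    simpa [Real.zero_rpow hβ0.ne'] using h2
  rw [ContinuousWithinAt, tendsto_iff_dist_tendsto_zero]
  refine squeeze_zero' (Eventually.of_forall fun _ => dist_nonneg) ?_ key
  filter_upwards [self_mem_nhdsWithin] with z hz
  by_cases hzy : y = z
  · subst hzy; simp [Real.zero_rpow hβ0.ne']
  · exact h.upper x hx y hy z hz hzy

lemma fol_inj (hC : 1 < C) {f fx : ℝ → ℝ → ℝ} (h : IsFol C β f fx) {x : ℝ}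
    (hx : x ∈ unitInterval) : InjOn (f x) (Icc 0 1) := by
  intro y hy z hz hyz
  by_contra hne
  have := h.lower x hx y hy z hz hne
  rw [hyz, sub_self, abs_zero] at this
  have h1 : 0 < |z - y| := abs_pos.2 (sub_ne_zero.2 (Ne.symm hne))
  have h2 : 0 < C⁻¹ * |z - y| ^ (1 / β) := by positivity
  linarith

lemma fol_mono (hC : 1 < C) (hβ0 : 0 < β) {f fx : ℝ → ℝ → ℝ} (h : IsFol C β f fx) {x : ℝ}
    (hx : x ∈ unitInterval) : StrictMonoOn (f x) (Icc 0 1) := by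
  refine ContinuousOn.strictMonoOn_of_injOn_Icc zero_le_one ?_ (fol_cont hβ0 h hx) (fol_inj hC h hx)
  rw [h.eq_bot x hx, h.eq_top x hx]; exact zero_le_one

lemma fol_bounds (hC : 1 < C) (hβ0 : 0 < β) {f fx : ℝ → ℝ → ℝ} (h : IsFol C β f fx) {x : ℝ}
    (hx : x ∈ unitInterval) {y z : ℝ} (hy : y ∈ Icc (0:ℝ) 1) (hz : z ∈ Icc (0:ℝ) 1) (hyz : y < z) :
    C⁻¹ * (z - y) ^ (1 / β) ≤ f x z - f x y ∧ f x z - f x y ≤ C * (z - y) ^ β := by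
  have hm := fol_mono hC hβ0 h hx hy hz hyz
  have h1 := h.lower x hx y hy z hz hyz.ne
  have h2 := h.upper x hx y hy z hz hyz.ne
  rw [abs_of_pos (sub_pos.2 hyz), abs_of_pos (sub_pos.2 hm)] at h1 h2
  exact ⟨h1, h2⟩

lemma fol_surj (hβ0 : 0 < β) {f fx : ℝ → ℝ → ℝ} (h : IsFol C β f fx) {x : ℝ}
    (hx : x ∈ unitInterval) {z : ℝ} (hz : z ∈ Icc (0:ℝ) 1) : ∃ y ∈ Icc (0:ℝ) 1, f x y = z := by
  have := intermediate_value_Icc zero_le_one (fol_cont hβ0 h hx)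
  rw [h.eq_bot x hx, h.eq_top x hx] at this
  exact this hz

lemma hinv_mem (hβ0 : 0 < β) {f fx : ℝ → ℝ → ℝ} (h : IsFol C β f fx) {x : ℝ}
    (hx : x ∈ unitInterval) {z : ℝ} (hz : z ∈ Icc (0:ℝ) 1) : hinv f x z ∈ Icc (0:ℝ) 1 :=
  Function.invFunOn_mem (fol_surj hβ0 h hx hz)

lemma hinv_eq (hβ0 : 0 < β) {f fx : ℝ → ℝ → ℝ} (h : IsFol C β f fx) {x : ℝ}
    (hx : x ∈ unitInterval) {z : ℝ} (hz : z ∈ Icc (0:ℝ) 1) : f x (hinv f x z) = z :=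
  Function.invFunOn_eq (fol_surj hβ0 h hx hz)

lemma hinv_left (hC : 1 < C) (hβ0 : 0 < β) {f fx : ℝ → ℝ → ℝ} (h : IsFol C β f fx) {x : ℝ}
    (hx : x ∈ unitInterval) {y : ℝ} (hy : y ∈ Icc (0:ℝ) 1) : hinv f x (f x y) = y := by
  have hz := h.mapsTo x hx y hy
  exact fol_inj hC h hx (hinv_mem hβ0 h hx hz) hy (hinv_eq hβ0 h hx hz)

lemma hinv_zero (hC : 1 < C) (hβ0 : 0 < β) {f fx : ℝ → ℝ → ℝ} (h : IsFol C β f fx) {x : ℝ}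
    (hx : x ∈ unitInterval) : hinv f x 0 = 0 := by
  have := hinv_left hC hβ0 h hx (y := 0) (by simp)
  rwa [h.eq_bot x hx] at this

/-- inversion of the lower bound -/
lemma inv_lower (hC : 1 < C) (hβ0 : 0 < β) {s c : ℝ} (hs : 0 ≤ s)
    (h : C⁻¹ * s ^ (1 / β) ≤ c) : s ≤ (C * c) ^ β := by
  have h1 : s ^ (1 / β) ≤ C * c := by
    have : 0 < C := by linarith
    calc s ^ (1 / β) = C * (C⁻¹ * s ^ (1 / β)) := by field_simp
      _ ≤ C * c := by gcongr
  have h2 := Real.rpow_le_rpow (by positivity) h1 hβ0.le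
  rwa [← Real.rpow_mul hs, one_div, inv_mul_cancel₀ hβ0.ne', Real.rpow_one] at h2

lemma hinv_holder (hC : 1 < C) (hβ0 : 0 < β) (hβ : β < 1) {f fx : ℝ → ℝ → ℝ}
    (h : IsFol C β f fx) {x : ℝ}
    (hx : x ∈ unitInterval) {z w : ℝ} (hz : z ∈ Icc (0:ℝ) 1) (hw : w ∈ Icc (0:ℝ) 1) :
    |hinv f x w - hinv f x z| ≤ C * |w - z| ^ β := by
  have hC0 : 0 < C := by linarith
  by_cases hne : hinv f x z = hinv f x w
  · rw [hne, sub_self, abs_zero]; positivity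
  · have h1 := h.lower x hx _ (hinv_mem hβ0 h hx hz) _ (hinv_mem hβ0 h hx hw) hne
    rw [hinv_eq hβ0 h hx hz, hinv_eq hβ0 h hx hw] at h1
    have h2 := inv_lower hC hβ0 (abs_nonneg _) h1
    rw [Real.mul_rpow hC0.le (abs_nonneg _)] at h2
    refine h2.trans ?_
    gcongr
    calc C ^ β ≤ C ^ (1:ℝ) := Real.rpow_le_rpow_of_exponent_le hC.le hβ.le
      _ = C := Real.rpow_one C

lemma f_holder (hC : 1 < C) (hβ0 : 0 < β) {f fx : ℝ → ℝ → ℝ}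
    (h : IsFol C β f fx) {x : ℝ}
    (hx : x ∈ unitInterval) {z w : ℝ} (hz : z ∈ Icc (0:ℝ) 1) (hw : w ∈ Icc (0:ℝ) 1) :
    |f x w - f x z| ≤ C * |w - z| ^ β := by
  by_cases hne : z = w
  · rw [hne, sub_self, abs_zero]; positivity
  · exact h.upper x hx z hz w hw hne

/-- bound on Hölder quotients -/
lemma quot_bound (hC : 1 < C) (hαβ : α < β) {h k : ℝ → ℝ}
    (hh : ∀ z ∈ Icc (0:ℝ) 1, ∀ w ∈ Icc (0:ℝ) 1, |h w - h z| ≤ C * |w - z| ^ β)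
    (hk : ∀ z ∈ Icc (0:ℝ) 1, ∀ w ∈ Icc (0:ℝ) 1, |k w - k z| ≤ C * |w - z| ^ β)
    {z w : ℝ} (hz : z ∈ Icc (0:ℝ) 1) (hw : w ∈ Icc (0:ℝ) 1) (hne : z ≠ w) :
    |(h w - k w) - (h z - k z)| / |w - z| ^ α ≤ 2 * C * |w - z| ^ (β - α) := by
  have hd : 0 < |w - z| := abs_pos.2 (sub_ne_zero.2 (Ne.symm hne))
  rw [div_le_iff₀ (by positivity), mul_assoc, ← Real.rpow_add hd, sub_add_cancel]
  have e : (h w - k w) - (h z - k z) = (h w - h z) - (k w - k z) := by ring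
  rw [e]
  have := abs_sub (h w - h z) (k w - k z)
  have h1 := hh z hz w hw
  have h2 := hk z hz w hw
  linarith

lemma quot_bdd (hC : 1 < C) (hαβ : α < β) {h k : ℝ → ℝ}
    (hh : ∀ z ∈ Icc (0:ℝ) 1, ∀ w ∈ Icc (0:ℝ) 1, |h w - h z| ≤ C * |w - z| ^ β)
    (hk : ∀ z ∈ Icc (0:ℝ) 1, ∀ w ∈ Icc (0:ℝ) 1, |k w - k z| ≤ C * |w - z| ^ β)
    {z w : ℝ} (hz : z ∈ Icc (0:ℝ) 1) (hw : w ∈ Icc (0:ℝ) 1) (hne : z ≠ w) :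
    |(h w - k w) - (h z - k z)| / |w - z| ^ α ≤ 2 * C := by
  refine (quot_bound hC hαβ hh hk hz hw hne).trans ?_
  have : |w - z| ^ (β - α) ≤ 1 := by
    apply Real.rpow_le_one (abs_nonneg _) _ (by linarith)
    rw [abs_le]; constructor <;> linarith [hz.1, hz.2, hw.1, hw.2]
  have hC0 : 0 < C := by linarith
  nlinarith

/-- interpolation: uniform closeness gives Hölder closeness -/
lemma quot_small (hC : 1 < C) (hα : 0 ≤ α) (hαβ : α < β) {ε : ℝ} (hε : 0 < ε) :
    ∃ δ > 0, ∀ h k : ℝ → ℝ,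
    (∀ z ∈ Icc (0:ℝ) 1, ∀ w ∈ Icc (0:ℝ) 1, |h w - h z| ≤ C * |w - z| ^ β) →
    (∀ z ∈ Icc (0:ℝ) 1, ∀ w ∈ Icc (0:ℝ) 1, |k w - k z| ≤ C * |w - z| ^ β) →
    (∀ z ∈ Icc (0:ℝ) 1, |h z - k z| ≤ δ) → holDist α h k ≤ ε := by
  have hC0 : 0 < C := by linarith
  have hba : 0 < β - α := by linarith
  set ρ : ℝ := (ε / (2 * C)) ^ (1 / (β - α)) with hρ
  have hρ0 : 0 < ρ := by positivity
  have hρe : 2 * C * ρ ^ (β - α) = ε := by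
    rw [hρ, ← Real.rpow_mul (by positivity), one_div, inv_mul_cancel₀ hba.ne', Real.rpow_one]
    field_simp
  refine ⟨ε * ρ ^ α / 2, by positivity, fun h k hh hk hd => ?_⟩
  refine Real.sSup_le ?_ hε.le
  rintro r ⟨z, hz, w, hw, hne, rfl⟩
  have hp : 0 < |w - z| := abs_pos.2 (sub_ne_zero.2 (Ne.symm hne))
  rcases le_total |w - z| ρ with hle | hle
  · refine (quot_bound hC hαβ hh hk hz hw hne).trans ?_
    rw [← hρe]
    gcongr
  · rw [div_le_iff₀ (by positivity)]
    have h1 := abs_sub (h w - k w) (h z - k z)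
    have h2 := hd z hz
    have h3 := hd w hw
    have h4 : ρ ^ α ≤ |w - z| ^ α := Real.rpow_le_rpow hρ0.le hle hα
    nlinarith

/-- `d_α` is controlled by `C⁰` closeness of `f` and `∂f/∂x`. -/
lemma dalpha_small (hC : 1 < C) (hα : 0 ≤ α) (hαβ : α < β) (hβ : β < 1) {ε : ℝ} (hε : 0 < ε) :
    ∃ δ > 0, ∀ F G : Fol C β,
      (∀ x ∈ Icc (0:ℝ) 1, ∀ y ∈ Icc (0:ℝ) 1, |G.f x y - F.f x y| ≤ δ) →
      (∀ x ∈ Icc (0:ℝ) 1, ∀ y ∈ Icc (0:ℝ) 1, |G.fx x y - F.fx x y| ≤ δ) →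
      dalphaF α G F < ε := by
  have hC0 : 0 < C := by linarith
  have hβ0 : 0 < β := by linarith
  obtain ⟨δ₁, hδ₁, H⟩ := quot_small (α := α) (β := β) hC hα hαβ (ε := ε / 4) (by positivity)
  set δ₂ : ℝ := δ₁ ^ (1 / β) / C with hδ₂
  have hδ₂0 : 0 < δ₂ := by positivity
  refine ⟨min (min δ₁ δ₂) (ε / 5), by positivity, fun F G h0 h1 => ?_⟩
  have h0a : ∀ x ∈ Icc (0:ℝ) 1, ∀ y ∈ Icc (0:ℝ) 1, |G.f x y - F.f x y| ≤ δ₁ := fun x hx y hy =>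
    (h0 x hx y hy).trans ((min_le_left _ _).trans (min_le_left _ _))
  have h0b : ∀ x ∈ Icc (0:ℝ) 1, ∀ y ∈ Icc (0:ℝ) 1, |G.f x y - F.f x y| ≤ δ₂ := fun x hx y hy =>
    (h0 x hx y hy).trans ((min_le_left _ _).trans (min_le_right _ _))
  have a1 : C0dist G.f F.f ≤ ε / 5 := by
    refine Real.sSup_le ?_ (by positivity)
    rintro r ⟨x, hx, y, hy, rfl⟩
    exact (h0 x hx y hy).trans (min_le_right _ _)
  have a2 : C0dist G.fx F.fx ≤ ε / 5 := by
    refine Real.sSup_le ?_ (by positivity)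
    rintro r ⟨x, hx, y, hy, rfl⟩
    exact (h1 x hx y hy).trans (min_le_right _ _)
  have a3 : sSup {r | ∃ x ∈ unitInterval,
      r = max (holDist α (G.f x) (F.f x)) (holDist α (hinv G.f x) (hinv F.f x))} ≤ ε / 4 := by
    refine Real.sSup_le ?_ (by positivity)
    rintro r ⟨x, hx, rfl⟩
    refine max_le ?_ ?_
    · exact H _ _ (fun z hz w hw => f_holder hC hβ0 G.isFol hx hz hw)
        (fun z hz w hw => f_holder hC hβ0 F.isFol hx hz hw) (h0a x hx)
    · refine H _ _ (fun z hz w hw => hinv_holder hC hβ0 hβ G.isFol hx hz hw)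
        (fun z hz w hw => hinv_holder hC hβ0 hβ F.isFol hx hz hw) ?_
      intro z hz
      by_cases hne : hinv F.f x z = hinv G.f x z
      · rw [hne, sub_self, abs_zero]; exact hδ₁.le
      have b1 := F.isFol.lower x hx _ (hinv_mem hβ0 F.isFol hx hz) _
        (hinv_mem hβ0 G.isFol hx hz) hne
      have b2 := h0b x hx _ (hinv_mem hβ0 G.isFol hx hz)
      rw [hinv_eq hβ0 F.isFol hx hz] at b1
      rw [hinv_eq hβ0 G.isFol hx hz, abs_sub_comm] at b2
      have b3 := inv_lower hC hβ0 (abs_nonneg _) (b1.trans b2)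
      have b4 : (C * δ₂) ^ β = δ₁ := by
        rw [hδ₂, mul_div_cancel₀ _ hC0.ne', ← Real.rpow_mul hδ₁.le, one_div,
          inv_mul_cancel₀ hβ0.ne', Real.rpow_one]
      rwa [b4] at b3
  unfold dalphaF dalpha
  linarith

/-- the inverse holonomies are uniformly controlled by `d_α`. -/
lemma hinv_le_dalpha (hC : 1 < C) (hα : 0 ≤ α) (hαβ : α < β) (hβ : β < 1) (F G : Fol C β)
    {x z : ℝ} (hx : x ∈ Icc (0:ℝ) 1) (hz : z ∈ Icc (0:ℝ) 1) :
    |hinv G.f x z - hinv F.f x z| ≤ dalphaF α G F := by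
  have hC0 : 0 < C := by linarith
  have hβ0 : 0 < β := by linarith
  have c1 : 0 ≤ C0dist G.f F.f := by
    apply Real.sSup_nonneg; rintro r ⟨x, hx, y, hy, rfl⟩; exact abs_nonneg _
  have c2 : 0 ≤ C0dist G.fx F.fx := by
    apply Real.sSup_nonneg; rintro r ⟨x, hx, y, hy, rfl⟩; exact abs_nonneg _
  have bd : ∀ x ∈ Icc (0:ℝ) 1, ∀ r ∈ {r | ∃ y₁ ∈ unitInterval, ∃ y₂ ∈ unitInterval, y₁ ≠ y₂ ∧
      r = |(hinv G.f x y₂ - hinv F.f x y₂) - (hinv G.f x y₁ - hinv F.f x y₁)| / |y₂ - y₁| ^ α},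
      r ≤ 2 * C := by
    rintro x hx r ⟨y₁, h1, y₂, h2, hne, rfl⟩
    exact quot_bdd hC hαβ (fun z hz w hw => hinv_holder hC hβ0 hβ G.isFol hx hz hw)
        (fun z hz w hw => hinv_holder hC hβ0 hβ F.isFol hx hz hw) h1 h2 hne
  have bd2 : ∀ x ∈ Icc (0:ℝ) 1, ∀ r ∈ {r | ∃ y₁ ∈ unitInterval, ∃ y₂ ∈ unitInterval, y₁ ≠ y₂ ∧
      r = |(G.f x y₂ - F.f x y₂) - (G.f x y₁ - F.f x y₁)| / |y₂ - y₁| ^ α},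
      r ≤ 2 * C := by
    rintro x hx r ⟨y₁, h1, y₂, h2, hne, rfl⟩
    exact quot_bdd hC hαβ (fun z hz w hw => f_holder hC hβ0 G.isFol hx hz hw)
        (fun z hz w hw => f_holder hC hβ0 F.isFol hx hz hw) h1 h2 hne
  have hmax : max (holDist α (G.f x) (F.f x)) (holDist α (hinv G.f x) (hinv F.f x)) ≤
      sSup {r | ∃ x ∈ unitInterval,
      r = max (holDist α (G.f x) (F.f x)) (holDist α (hinv G.f x) (hinv F.f x))} := by
    refine le_csSup ⟨2 * C, ?_⟩ ⟨x, hx, rfl⟩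
    rintro r ⟨x, hx, rfl⟩
    exact max_le (Real.sSup_le (bd2 x hx) (by positivity)) (Real.sSup_le (bd x hx) (by positivity))
  have hle : holDist α (hinv G.f x) (hinv F.f x) ≤ dalphaF α G F := by
    have := (le_max_right (holDist α (G.f x) (F.f x)) (holDist α (hinv G.f x) (hinv F.f x))).trans hmax
    unfold dalphaF dalpha
    linarith
  have hnn : 0 ≤ holDist α (hinv G.f x) (hinv F.f x) := by
    apply Real.sSup_nonneg; rintro r ⟨y₁, _, y₂, _, _, rfl⟩; positivity
  by_cases hz0 : z = 0
  · subst hz0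
    rw [hinv_zero hC hβ0 F.isFol hx, hinv_zero hC hβ0 G.isFol hx, sub_self, abs_zero]
    linarith
  refine le_trans ?_ hle
  have hr : |(hinv G.f x z - hinv F.f x z) - (hinv G.f x 0 - hinv F.f x 0)| / |z - 0| ^ α ≤
      holDist α (hinv G.f x) (hinv F.f x) :=
    le_csSup ⟨2 * C, fun r hr => bd x hx r hr⟩ ⟨0, by simp, z, hz, Ne.symm hz0, rfl⟩
  rw [hinv_zero hC hβ0 F.isFol hx, hinv_zero hC hβ0 G.isFol hx] at hr
  refine le_trans ?_ hr
  have hzp : 0 < z := lt_of_le_of_ne hz.1 (Ne.symm hz0)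
  simp only [sub_zero, abs_of_pos hzp]
  rw [le_div_iff₀ (by positivity)]
  have : z ^ α ≤ 1 := Real.rpow_le_one hz.1 hz.2 hα
  exact mul_le_of_le_one_right (abs_nonneg _) this



/-- hat function -/
def hatf (t : ℝ) : ℝ := max 0 (1 - |t|)

/-- piecewise linear interpolation at the nodes `i/N` -/
def plf (N : ℕ) (p : ℝ → ℝ) (y : ℝ) : ℝ :=
  ∑ i ∈ Finset.range (N + 1), hatf (N * y - i) * p (i / N)

lemma hatf_cont : Continuous hatf := by unfold hatf; fun_prop

lemma plf_cell {N : ℕ} (hN : 0 < N) (p : ℝ → ℝ) {j : ℕ} (hj : j < N) {θ : ℝ} (h0 : 0 ≤ θ)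
    (h1 : θ ≤ 1) :
    plf N p ((j + θ) / N) = (1 - θ) * p (j / N) + θ * p (((j : ℝ) + 1) / N) := by
  have hN' : (N : ℝ) ≠ 0 := by positivity
  unfold plf
  rw [Finset.sum_eq_add_of_mem j (j + 1) (by simp; omega) (by simp; omega) (by omega)]
  · have e1 : (N : ℝ) * ((j + θ) / N) - j = θ := by field_simp; ring
    have e2 : (N : ℝ) * ((j + θ) / N) - ((j + 1 : ℕ) : ℝ) = θ - 1 := by
      push_cast; field_simp; ring
    rw [e1, e2]
    have e3 : hatf θ = 1 - θ := by
      unfold hatf; rw [abs_of_nonneg h0, max_eq_right (by linarith)]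
    have e4 : hatf (θ - 1) = θ := by
      unfold hatf; rw [abs_of_nonpos (by linarith), max_eq_right (by linarith)]; ring
    rw [e3, e4]; push_cast; rfl
  · intro c _ hc
    have e1 : (N : ℝ) * ((j + θ) / N) - c = j + θ - c := by field_simp
    rw [e1]
    have : hatf (j + θ - c) = 0 := by
      unfold hatf
      rw [max_eq_left]
      rcases lt_or_gt_of_ne hc.1 with h | h
      · have h' : (c : ℝ) + 1 ≤ j := by exact_mod_cast h
        have := le_abs_self ((j : ℝ) + θ - c)
        linarith
      · have h2 : j + 2 ≤ c := by omega
        have h' : (j : ℝ) + 2 ≤ c := by exact_mod_cast h2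
        have := neg_le_abs ((j : ℝ) + θ - c)
        linarith
    rw [this, zero_mul]

lemma cell_exists {N : ℕ} (hN : 0 < N) {y : ℝ} (hy : y ∈ Icc (0:ℝ) 1) :
    ∃ j : ℕ, j < N ∧ ∃ θ : ℝ, 0 ≤ θ ∧ θ ≤ 1 ∧ y = (j + θ) / N := by
  have hN' : (0:ℝ) < N := by positivity
  by_cases h : y = 1
  · refine ⟨N - 1, by omega, 1, zero_le_one, le_rfl, ?_⟩
    rw [Nat.cast_sub (by omega), h]; push_cast; field_simp; ring
  · have hy1 : y < 1 := lt_of_le_of_ne hy.2 h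
    have h0 : 0 ≤ (N:ℝ) * y := mul_nonneg hN'.le hy.1
    refine ⟨⌊(N:ℝ) * y⌋₊, ?_, N * y - ⌊(N:ℝ) * y⌋₊, ?_, ?_, ?_⟩
    · rw [Nat.floor_lt h0]; nlinarith
    · have := Nat.floor_le h0; linarith
    · have := Nat.lt_floor_add_one ((N:ℝ) * y); linarith
    · field_simp; ring

lemma plf_sub_le {N : ℕ} (hN : 0 < N) {p H : ℝ → ℝ} (hH : ConcaveOn ℝ (Ici 0) H) (hH0 : H 0 = 0)
    (hp : ∀ i j : ℕ, i ≤ j → j ≤ N → p (j / N) - p (i / N) ≤ H (j / N - i / N))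
    {y z : ℝ} (hy : y ∈ Icc (0:ℝ) 1) (hz : z ∈ Icc (0:ℝ) 1) (hyz : y ≤ z) :
    plf N p z - plf N p y ≤ H (z - y) := by
  have hN' : (0:ℝ) < N := by positivity
  rcases hyz.eq_or_lt with rfl | hlt
  · simp [hH0]
  obtain ⟨i, hi, η, hη0, hη1, rfl⟩ := cell_exists hN hy
  obtain ⟨j, hj, θ, hθ0, hθ1, rfl⟩ := cell_exists hN hz
  have hlt' : (i:ℝ) + η < j + θ := by rwa [div_lt_div_iff_of_pos_right hN'] at hlt
  have hij : i ≤ j := by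
    by_contra hc
    have : (j:ℝ) + 1 ≤ i := by exact_mod_cast (not_le.1 hc)
    linarith
  -- step A
  have stepA : ∀ k : ℕ, k ≤ j →
      plf N p ((j + θ) / N) - p (k / N) ≤ H ((j + θ) / N - k / N) := by
    intro k hk
    have hk' : (k:ℝ) ≤ j := by exact_mod_cast hk
    rw [plf_cell hN p hj hθ0 hθ1]
    have a1 := hp k j hk hj.le
    have a2 := hp k (j + 1) (by omega) hj
    push_cast at a2
    have a3 := hH.2 (x := (j:ℝ) / N - k / N) (y := ((j:ℝ) + 1) / N - k / N)
      (by rw [mem_Ici, ← sub_div]; exact div_nonneg (by linarith) hN'.le)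
      (by rw [mem_Ici, ← sub_div]; exact div_nonneg (by linarith) hN'.le)
      (sub_nonneg.2 hθ1) hθ0 (by ring)
    simp only [smul_eq_mul] at a3
    have e : (1 - θ) * ((j:ℝ) / N - k / N) + θ * (((j:ℝ) + 1) / N - k / N) =
        (j + θ) / N - k / N := by field_simp; ring
    rw [e] at a3
    have b1 := mul_le_mul_of_nonneg_left a1 (sub_nonneg.2 hθ1)
    have b2 := mul_le_mul_of_nonneg_left a2 hθ0
    linarith
  rcases hij.eq_or_lt with rfl | hij
  · rw [plf_cell hN p hj hθ0 hθ1, plf_cell hN p hi hη0 hη1]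
    have a2 := hp i (i + 1) (by omega) hj
    push_cast at a2
    have hd0 : 0 ≤ θ - η := by linarith
    have a3 := hH.2 (x := (0:ℝ)) (y := ((i:ℝ) + 1) / N - i / N) (by simp)
      (by rw [mem_Ici, ← sub_div]; exact div_nonneg (by linarith) hN'.le)
      (show (0:ℝ) ≤ 1 - (θ - η) by linarith) hd0 (by ring)
    simp only [smul_eq_mul, hH0, mul_zero, zero_add] at a3
    have e : (θ - η) * (((i:ℝ) + 1) / N - i / N) = (i + θ) / N - (i + η) / N := by
      field_simp; ring
    rw [e] at a3
    have b2 := mul_le_mul_of_nonneg_left a2 hd0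
    linarith
  · have hij' : (i:ℝ) + 1 ≤ j := by exact_mod_cast hij
    rw [plf_cell hN p hi hη0 hη1]
    have a1 := stepA i hij.le
    have a2 := stepA (i + 1) hij
    push_cast at a2
    have a3 := hH.2 (x := ((j:ℝ) + θ) / N - i / N) (y := ((j:ℝ) + θ) / N - (i + 1) / N)
      (by rw [mem_Ici, ← sub_div]; exact div_nonneg (by linarith) hN'.le)
      (by rw [mem_Ici, ← sub_div]; exact div_nonneg (by linarith) hN'.le)
      (sub_nonneg.2 hη1) hη0 (by ring)
    simp only [smul_eq_mul] at a3
    have e : (1 - η) * (((j:ℝ) + θ) / N - i / N) + η * (((j:ℝ) + θ) / N - (i + 1) / N) =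
        (j + θ) / N - (i + η) / N := by field_simp; ring
    rw [e] at a3
    have b1 := mul_le_mul_of_nonneg_left a1 (sub_nonneg.2 hη1)
    have b2 := mul_le_mul_of_nonneg_left a2 hη0
    linarith

lemma node_mem {N : ℕ} (hN : 0 < N) {j : ℕ} (hj : j ≤ N) : (j : ℝ) / N ∈ Icc (0:ℝ) 1 := by
  have hN' : (0:ℝ) < N := by positivity
  refine ⟨by positivity, ?_⟩
  rw [div_le_one hN']; exact_mod_cast hj

/-- the interpolation is close to the function -/
lemma plf_close {N : ℕ} (hN : 0 < N) {p : ℝ → ℝ} {ε : ℝ}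
    (hp : ∀ y ∈ Icc (0:ℝ) 1, ∀ z ∈ Icc (0:ℝ) 1, |z - y| ≤ 1 / N → |p z - p y| ≤ ε)
    {y : ℝ} (hy : y ∈ Icc (0:ℝ) 1) : |plf N p y - p y| ≤ ε := by
  have hN' : (0:ℝ) < N := by positivity
  obtain ⟨i, hi, η, hη0, hη1, rfl⟩ := cell_exists hN hy
  rw [plf_cell hN p hi hη0 hη1]
  have m2 : ((i:ℝ) + 1) / N ∈ Icc (0:ℝ) 1 := by
    have := node_mem hN (j := i + 1) hi
    push_cast at this; exact this
  have a1 := hp _ hy _ (node_mem hN hi.le) (by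
    rw [← sub_div, abs_div, abs_of_pos hN']
    gcongr
    rw [abs_le]; constructor <;> linarith)
  have a2 := hp _ hy _ m2 (by
    rw [← sub_div, abs_div, abs_of_pos hN']
    gcongr
    rw [abs_le]; constructor <;> linarith)
  rw [abs_le] at a1 a2 ⊢
  constructor <;> nlinarith [a1.1, a1.2, a2.1, a2.2]

lemma plf_zero {N : ℕ} (hN : 0 < N) (p : ℝ → ℝ) : plf N p 0 = p 0 := by
  have := plf_cell hN p (j := 0) hN (θ := 0) le_rfl zero_le_one
  simpa using this

lemma plf_one {N : ℕ} (hN : 0 < N) (p : ℝ → ℝ) : plf N p 1 = p 1 := by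
  have hN' : (N:ℝ) ≠ 0 := by positivity
  have := plf_cell hN p (j := N - 1) (by omega) (θ := 1) zero_le_one le_rfl
  have e : (((N - 1 : ℕ) : ℝ) + 1) / N = 1 := by
    rw [Nat.cast_sub (by omega)]; push_cast; field_simp; ring
  rw [e] at this
  simpa using this

lemma plf_congr {N : ℕ} (hN : 0 < N) {p q : ℝ → ℝ} (h : ∀ y ∈ Icc (0:ℝ) 1, p y = q y) (y : ℝ) :
    plf N p y = plf N q y := by
  refine Finset.sum_congr rfl fun i hi => ?_
  rw [h _ (node_mem hN (by simp at hi; omega))]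

lemma plf_id {N : ℕ} (hN : 0 < N) {y : ℝ} (hy : y ∈ Icc (0:ℝ) 1) : plf N (fun t => t) y = y := by
  have hN' : (N:ℝ) ≠ 0 := by positivity
  obtain ⟨i, hi, η, hη0, hη1, rfl⟩ := cell_exists hN hy
  rw [plf_cell hN _ hi hη0 hη1]; field_simp; ring

/-- Closeness to a function with slack plus bi-Lipschitz implies bi-Hölder. -/
lemma holder_of_close (hC : 1 < C) (hβ0 : 0 < β) (hβ : β < 1) {A a l L : ℝ} (hA : A < C)
    (ha : C⁻¹ < a) (hl : 0 < l) (hL : 0 < L) :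
    ∃ ε₀ > 0, ∀ f g : ℝ → ℝ,
      (∀ y ∈ Icc (0:ℝ) 1, ∀ z ∈ Icc (0:ℝ) 1, y < z →
        a * (z - y) ^ (1 / β) ≤ f z - f y ∧ f z - f y ≤ A * (z - y) ^ β) →
      (∀ y ∈ Icc (0:ℝ) 1, |g y - f y| ≤ ε₀) →
      (∀ y ∈ Icc (0:ℝ) 1, ∀ z ∈ Icc (0:ℝ) 1, y < z →
        l * (z - y) ≤ g z - g y ∧ g z - g y ≤ L * (z - y)) →
      (∀ y ∈ Icc (0:ℝ) 1, ∀ z ∈ Icc (0:ℝ) 1, y < z →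
        C⁻¹ * (z - y) ^ (1 / β) ≤ g z - g y ∧ g z - g y ≤ C * (z - y) ^ β) := by
  have hC0 : 0 < C := by linarith
  have h1β : 0 < 1 - β := by linarith
  have hb1 : 0 < 1 / β - 1 := by rw [sub_pos, lt_div_iff₀ hβ0]; linarith
  set c₁ : ℝ := (C / L) ^ (1 / (1 - β)) with hc₁
  set c₂ : ℝ := (C * l) ^ (1 / (1 / β - 1)) with hc₂
  have hc₁0 : 0 < c₁ := by positivity
  have hc₂0 : 0 < c₂ := by positivity
  set c := min c₁ c₂ with hc
  have hc0 : 0 < c := lt_min hc₁0 hc₂0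
  have e1 : c₁ ^ (1 - β) = C / L := by
    rw [hc₁, ← Real.rpow_mul (by positivity), one_div, inv_mul_cancel₀ h1β.ne', Real.rpow_one]
  have e2 : c₂ ^ (1 / β - 1) = C * l := by
    rw [hc₂, ← Real.rpow_mul (by positivity), one_div (1 / β - 1), inv_mul_cancel₀ hb1.ne',
      Real.rpow_one]
  have hAC : 0 < C - A := by linarith
  have haC : 0 < a - C⁻¹ := by linarith
  refine ⟨min ((C - A) * c ^ β / 2) ((a - C⁻¹) * c ^ (1 / β) / 2), by positivity, ?_⟩
  intro f g hf hclose hg y hy z hz hyz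
  have hd : 0 < z - y := sub_pos.2 hyz
  obtain ⟨g1, g2⟩ := hg y hy z hz hyz
  obtain ⟨f1, f2⟩ := hf y hy z hz hyz
  rcases le_total (z - y) c with hle | hle
  · constructor
    · refine le_trans ?_ g1
      have : (z - y) ^ (1 / β) = (z - y) ^ (1 / β - 1) * (z - y) := by
        conv_rhs => rw [← Real.rpow_add_one hd.ne']
        congr 1; ring
      rw [this, ← mul_assoc]
      gcongr
      have : (z - y) ^ (1 / β - 1) ≤ C * l := by
        rw [← e2]; exact Real.rpow_le_rpow hd.le (hle.trans (min_le_right _ _)) hb1.le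
      calc C⁻¹ * (z - y) ^ (1 / β - 1) ≤ C⁻¹ * (C * l) := by gcongr
        _ = l := by field_simp
    · refine g2.trans ?_
      have : (z - y) = (z - y) ^ (1 - β) * (z - y) ^ β := by
        rw [← Real.rpow_add hd]; simp
      calc L * (z - y) = L * (z - y) ^ (1 - β) * (z - y) ^ β := by
            conv_lhs => rw [this]
            ring
        _ ≤ C * (z - y) ^ β := by
            gcongr
            have : (z - y) ^ (1 - β) ≤ C / L := by
              rw [← e1]; exact Real.rpow_le_rpow hd.le (hle.trans (min_le_left _ _)) h1β.le
            calc L * (z - y) ^ (1 - β) ≤ L * (C / L) := by gcongr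
              _ = C := by field_simp
  · have cy := abs_le.1 (hclose y hy)
    have cz := abs_le.1 (hclose z hz)
    have m1 := min_le_left ((C - A) * c ^ β / 2) ((a - C⁻¹) * c ^ (1 / β) / 2)
    have m2 := min_le_right ((C - A) * c ^ β / 2) ((a - C⁻¹) * c ^ (1 / β) / 2)
    have r1 : c ^ β ≤ (z - y) ^ β := Real.rpow_le_rpow hc0.le hle hβ0.le
    have r2 : c ^ (1 / β) ≤ (z - y) ^ (1 / β) := Real.rpow_le_rpow hc0.le hle (by positivity)
    have r3 := mul_le_mul_of_nonneg_left r1 hAC.le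
    have r4 := mul_le_mul_of_nonneg_left r2 haC.le
    constructor <;> nlinarith [cy.1, cy.2, cz.1, cz.2]



/-- Smooth foliation data with slack. -/
structure Sm (β A a l L : ℝ) (f fx : ℝ → ℝ → ℝ) : Prop where
  mapsTo : ∀ x ∈ Icc (0:ℝ) 1, ∀ y ∈ Icc (0:ℝ) 1, f x y ∈ Icc (0:ℝ) 1
  hasDeriv : ∀ y ∈ Icc (0:ℝ) 1, ∀ x ∈ Icc (0:ℝ) 1,
    HasDerivWithinAt (fun x' => f x' y) (fx x y) (Icc 0 1) x
  derivCont : ContinuousOn (fun p : ℝ × ℝ => fx p.1 p.2) (Icc 0 1 ×ˢ Icc 0 1)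
  eq_id : ∀ y ∈ Icc (0:ℝ) 1, f 0 y = y
  eq_bot : ∀ x ∈ Icc (0:ℝ) 1, f x 0 = 0
  eq_top : ∀ x ∈ Icc (0:ℝ) 1, f x 1 = 1
  hol : ∀ x ∈ Icc (0:ℝ) 1, ∀ y ∈ Icc (0:ℝ) 1, ∀ z ∈ Icc (0:ℝ) 1, y < z →
        a * (z - y) ^ (1 / β) ≤ f x z - f x y ∧ f x z - f x y ≤ A * (z - y) ^ β
  lip : ∀ x ∈ Icc (0:ℝ) 1, ∀ y ∈ Icc (0:ℝ) 1, ∀ z ∈ Icc (0:ℝ) 1, y < z →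
        l * (z - y) ≤ f x z - f x y ∧ f x z - f x y ≤ L * (z - y)

/-- uniform continuity in `y` of a continuous function on the square -/
lemma unif_y {k : ℝ → ℝ → ℝ}
    (hk : ContinuousOn (fun p : ℝ × ℝ => k p.1 p.2) (Icc 0 1 ×ˢ Icc 0 1)) {e : ℝ} (he : 0 < e) :
    ∃ δ > 0, ∀ x ∈ Icc (0:ℝ) 1, ∀ y ∈ Icc (0:ℝ) 1, ∀ z ∈ Icc (0:ℝ) 1, |z - y| < δ →
      |k x z - k x y| ≤ e := by
  have := (isCompact_Icc.prod isCompact_Icc).uniformContinuousOn_of_continuous hk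
  rw [Metric.uniformContinuousOn_iff] at this
  obtain ⟨δ, hδ, h⟩ := this e he
  refine ⟨δ, hδ, fun x hx y hy z hz hd => ?_⟩
  have := h (x, z) ⟨hx, hz⟩ (x, y) ⟨hx, hy⟩ (by
    rw [Prod.dist_eq, dist_self, max_eq_right dist_nonneg]; exact hd)
  exact this.le

lemma smooth_step (hC : 1 < C) (hβ0 : 0 < β) (hβ : β < 1) (F : Fol C β) {ε : ℝ} (hε : 0 < ε) :
    ∃ f fx : ℝ → ℝ → ℝ, ∃ A a l L : ℝ, A < C ∧ C⁻¹ < a ∧ 0 < l ∧ 0 < L ∧ Sm β A a l L f fx ∧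
      (∀ x ∈ Icc (0:ℝ) 1, ∀ y ∈ Icc (0:ℝ) 1, |f x y - F.f x y| ≤ ε) ∧
      (∀ x ∈ Icc (0:ℝ) 1, ∀ y ∈ Icc (0:ℝ) 1, |fx x y - F.fx x y| ≤ ε) := by
  have hC0 : 0 < C := by linarith
  have hCi : C⁻¹ < 1 := inv_lt_one_of_one_lt₀ hC
  have hF := F.isFol
  set e : ℝ := ε / 2 with he
  have he0 : 0 < e := by positivity
  obtain ⟨δ₁, hδ₁, hu⟩ := unif_y hF.derivCont he0
  set δ₂ : ℝ := (e / C) ^ (1 / β) with hδ₂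
  have hδ₂0 : 0 < δ₂ := by positivity
  have hδ₂e : C * δ₂ ^ β = e := by
    rw [hδ₂, ← Real.rpow_mul (by positivity), one_div, inv_mul_cancel₀ hβ0.ne', Real.rpow_one]
    field_simp
  obtain ⟨N', hN'⟩ := exists_nat_one_div_lt (lt_min hδ₁ hδ₂0)
  set N : ℕ := N' + 1 with hNdef
  have hN : 0 < N := Nat.succ_pos _
  have hNr : (0:ℝ) < N := by positivity
  have hNδ : 1 / (N:ℝ) < min δ₁ δ₂ := by rw [hNdef]; push_cast; exact hN'
  obtain ⟨M, hM⟩ := (isCompact_Icc.prod isCompact_Icc).exists_bound_of_continuousOn hF.derivCont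
  have hM' : ∀ x ∈ Icc (0:ℝ) 1, ∀ y ∈ Icc (0:ℝ) 1, |F.fx x y| ≤ M := fun x hx y hy =>
    hM (x, y) ⟨hx, hy⟩
  have hM0 : 0 ≤ M := (abs_nonneg _).trans (hM' 0 (by simp) 0 (by simp))
  set t : ℝ := min (1 / 2) (e / (M + e + 1)) with ht
  have ht0 : 0 < t := by positivity
  have ht1 : t ≤ 1 / 2 := min_le_left _ _
  have htM : t * (M + e + 1) ≤ e := by
    have := min_le_right (1 / 2) (e / (M + e + 1))
    rwa [← ht, le_div_iff₀ (by positivity)] at this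
  -- interpolation
  have up : ∀ x ∈ Icc (0:ℝ) 1, ∀ y ∈ Icc (0:ℝ) 1, ∀ z ∈ Icc (0:ℝ) 1, y < z →
      plf N (F.f x) z - plf N (F.f x) y ≤ C * (z - y) ^ β := by
    intro x hx y hy z hz hyz
    have hconc : ConcaveOn ℝ (Ici 0) (fun s : ℝ => C * s ^ β) := by
      have := (Real.concaveOn_rpow hβ0.le hβ.le).smul hC0.le
      simpa [smul_eq_mul] using this
    refine plf_sub_le hN hconc (by simp [Real.zero_rpow hβ0.ne']) ?_ hy hz hyz.le
    intro i j hij hj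
    rcases hij.eq_or_lt with rfl | hij
    · simp [Real.zero_rpow hβ0.ne']
    · have hij' : (i:ℝ) / N < j / N := by
        rw [div_lt_div_iff_of_pos_right hNr]; exact_mod_cast hij
      exact (fol_bounds hC hβ0 hF hx (node_mem hN (by omega)) (node_mem hN hj) hij').2
  have lo : ∀ x ∈ Icc (0:ℝ) 1, ∀ y ∈ Icc (0:ℝ) 1, ∀ z ∈ Icc (0:ℝ) 1, y < z →
      C⁻¹ * (z - y) ^ (1 / β) ≤ plf N (F.f x) z - plf N (F.f x) y := by
    intro x hx y hy z hz hyz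
    have hb1 : 1 ≤ 1 / β := by rw [le_div_iff₀ hβ0]; linarith
    have hb0 : 1 / β ≠ 0 := by positivity
    have hconc : ConcaveOn ℝ (Ici 0) (fun s : ℝ => -(C⁻¹ * s ^ (1 / β))) := by
      have := ((convexOn_rpow hb1).smul (inv_pos.2 hC0).le).neg
      exact this
    have := plf_sub_le (p := fun y => - F.f x y) hN hconc (by simp [Real.zero_rpow (inv_ne_zero hβ0.ne')]) ?_ hy hz hyz.le
    · have e : ∀ y, plf N (fun y => - F.f x y) y = - plf N (F.f x) y := by
        intro y; simp [plf]
      rw [e, e] at this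
      linarith
    intro i j hij hj
    rcases hij.eq_or_lt with rfl | hij
    · simp [Real.zero_rpow (inv_ne_zero hβ0.ne')]
    · have hij' : (i:ℝ) / N < j / N := by
        rw [div_lt_div_iff_of_pos_right hNr]; exact_mod_cast hij
      have := (fol_bounds hC hβ0 hF hx (node_mem hN (by omega)) (node_mem hN hj) hij').1
      linarith
  have lp : ∀ x ∈ Icc (0:ℝ) 1, ∀ y ∈ Icc (0:ℝ) 1, ∀ z ∈ Icc (0:ℝ) 1, y < z →
      plf N (F.f x) z - plf N (F.f x) y ≤ N * (z - y) := by
    intro x hx y hy z hz hyz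
    have hconc : ConcaveOn ℝ (Ici 0) (fun s : ℝ => (N:ℝ) * s) :=
      ⟨convex_Ici 0, fun x _ y _ a b _ _ _ => by simp only [smul_eq_mul]; linarith⟩
    refine plf_sub_le hN hconc (by simp) ?_ hy hz hyz.le
    intro i j hij hj
    rcases hij.eq_or_lt with rfl | hij
    · simp
    · have hij' : (i:ℝ) + 1 ≤ j := by exact_mod_cast hij
      have a1 := (hF.mapsTo x hx _ (node_mem hN hj)).2
      have a2 := (hF.mapsTo x hx _ (node_mem (j := i) hN (by omega))).1
      have : (N:ℝ) * ((j:ℝ) / N - i / N) = j - i := by field_simp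
      rw [this]; linarith
  have pb : ∀ x ∈ Icc (0:ℝ) 1, plf N (F.f x) 0 = 0 := fun x hx => by
    rw [plf_zero hN, hF.eq_bot x hx]
  have pt : ∀ x ∈ Icc (0:ℝ) 1, plf N (F.f x) 1 = 1 := fun x hx => by
    rw [plf_one hN, hF.eq_top x hx]
  have mono : ∀ x ∈ Icc (0:ℝ) 1, ∀ y ∈ Icc (0:ℝ) 1, ∀ z ∈ Icc (0:ℝ) 1, y ≤ z →
      plf N (F.f x) y ≤ plf N (F.f x) z := by
    intro x hx y hy z hz hyz
    rcases hyz.eq_or_lt with rfl | hlt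
    · exact le_rfl
    · have h1 := lo x hx y hy z hz hlt
      have : 0 < z - y := sub_pos.2 hlt
      have : 0 < C⁻¹ * (z - y) ^ (1 / β) := by positivity
      linarith
  have pm : ∀ x ∈ Icc (0:ℝ) 1, ∀ y ∈ Icc (0:ℝ) 1, plf N (F.f x) y ∈ Icc (0:ℝ) 1 := by
    intro x hx y hy
    have h1 := mono x hx 0 (by simp) y hy hy.1
    have h2 := mono x hx y hy 1 (by simp) hy.2
    rw [pb x hx] at h1
    rw [pt x hx] at h2
    exact ⟨h1, h2⟩
  have pc : ∀ x ∈ Icc (0:ℝ) 1, ∀ y ∈ Icc (0:ℝ) 1, |plf N (F.f x) y - F.f x y| ≤ e := by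
    intro x hx y hy
    refine plf_close hN ?_ hy
    intro y hy z hz hyz
    refine (f_holder hC hβ0 hF hx hy hz).trans ?_
    rw [← hδ₂e]
    gcongr
    exact hyz.trans (hNδ.le.trans (min_le_right _ _))
  have pxc : ∀ x ∈ Icc (0:ℝ) 1, ∀ y ∈ Icc (0:ℝ) 1, |plf N (F.fx x) y - F.fx x y| ≤ e := by
    intro x hx y hy
    refine plf_close hN ?_ hy
    intro y hy z hz hyz
    exact hu x hx y hy z hz (hyz.trans_lt (hNδ.trans_le (min_le_left _ _)))
  refine ⟨fun x y => (1 - t) * plf N (F.f x) y + t * y, fun x y => (1 - t) * plf N (F.fx x) y,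
    (1 - t) * C + t, (1 - t) * C⁻¹ + t, t, N, by nlinarith, by nlinarith, ht0, hNr, ?_, ?_, ?_⟩
  · constructor
    · intro x hx y hy
      have := pm x hx y hy
      exact ⟨by nlinarith [this.1, this.2, hy.1, hy.2], by nlinarith [this.1, this.2, hy.1, hy.2]⟩
    · intro y hy x hx
      have : HasDerivWithinAt (fun x' => plf N (F.f x') y) (plf N (F.fx x) y) (Icc 0 1) x := by
        unfold plf
        refine HasDerivWithinAt.fun_sum fun i hi => ?_
        exact (hF.hasDeriv _ (node_mem hN (by simp at hi; omega)) x hx).const_mul _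
      exact (this.const_mul (1 - t)).add_const _
    · refine continuousOn_const.mul ?_
      unfold plf
      refine continuousOn_finsetSum _ fun i hi => ?_
      have c1 : Continuous fun p : ℝ × ℝ => hatf (N * p.2 - i) := hatf_cont.comp (by fun_prop)
      refine c1.continuousOn.mul ?_
      have c2 : Continuous fun p : ℝ × ℝ => (p.1, (i:ℝ) / N) := by fun_prop
      exact hF.derivCont.comp c2.continuousOn
        (fun p hp => ⟨hp.1, node_mem hN (by simp at hi; omega)⟩)
    · intro y hy
      rw [plf_congr hN hF.eq_id, plf_id hN hy]; ring
    · intro x hx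
      simp [pb x hx]
    · intro x hx
      simp [pt x hx]
    · intro x hx y hy z hz hyz
      have hd : 0 < z - y := sub_pos.2 hyz
      have hd1 : z - y ≤ 1 := by linarith [hy.1, hz.2]
      have h1 := up x hx y hy z hz hyz
      have h2 := lo x hx y hy z hz hyz
      have h3 : z - y ≤ (z - y) ^ β := by
        have := Real.rpow_le_rpow_of_exponent_ge hd hd1 hβ.le
        rwa [Real.rpow_one] at this
      have h4 : (z - y) ^ (1 / β) ≤ z - y := by
        have hb1 : 1 ≤ 1 / β := by rw [le_div_iff₀ hβ0]; linarith
        have := Real.rpow_le_rpow_of_exponent_ge hd hd1 hb1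
        rwa [Real.rpow_one] at this
      have h5 := mul_le_mul_of_nonneg_left h1 (show 0 ≤ 1 - t by linarith)
      have h6 := mul_le_mul_of_nonneg_left h2 (show 0 ≤ 1 - t by linarith)
      have h7 := mul_le_mul_of_nonneg_left h3 ht0.le
      have h8 := mul_le_mul_of_nonneg_left h4 ht0.le
      constructor <;> linarith
    · intro x hx y hy z hz hyz
      have hd : 0 < z - y := sub_pos.2 hyz
      have h1 := lp x hx y hy z hz hyz
      have h2 := mono x hx y hy z hz hyz.le
      have h5 := mul_le_mul_of_nonneg_left h1 (show 0 ≤ 1 - t by linarith)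
      have h6 := mul_le_mul_of_nonneg_left h2 (show 0 ≤ 1 - t by linarith)
      have hN1 : (1:ℝ) ≤ N := by exact_mod_cast hN
      have h7 : t * (z - y) ≤ t * (N * (z - y)) := by
        gcongr; nlinarith
      constructor <;> linarith
  · intro x hx y hy
    have h1 := abs_le.1 (pc x hx y hy)
    have h2 := pm x hx y hy
    have h3 : t ≤ e := by nlinarith
    rw [abs_le]
    have h4 : |t * (y - plf N (F.f x) y)| ≤ t := by
      rw [abs_mul, abs_of_pos ht0]
      apply mul_le_of_le_one_right ht0.le
      rw [abs_le]; constructor <;> linarith [hy.1, hy.2, h2.1, h2.2]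
    have h5 := abs_le.1 h4
    constructor <;> linarith [h1.1, h1.2, h5.1, h5.2]
  · intro x hx y hy
    have h1 := abs_le.1 (pxc x hx y hy)
    have h2 := abs_le.1 (hM' x hx y hy)
    have h4 : |t * plf N (F.fx x) y| ≤ e := by
      rw [abs_mul, abs_of_pos ht0]
      refine le_trans ?_ htM
      gcongr
      rw [abs_le]; constructor <;> linarith [h1.1, h1.2, h2.1, h2.2]
    have h5 := abs_le.1 h4
    rw [abs_le]
    constructor <;> linarith [h1.1, h1.2, h5.1, h5.2]



/-- rescaled distance to the nearest integer -/
def tentf (n : ℕ) (y : ℝ) : ℝ := |n * y - round ((n:ℝ) * y)| / n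

lemma tentf_nonneg (n : ℕ) (y : ℝ) : 0 ≤ tentf n y := by unfold tentf; positivity

lemma tentf_le {n : ℕ} (hn : 0 < n) (y : ℝ) : tentf n y ≤ 1 / 2 / n := by
  unfold tentf; gcongr; exact abs_sub_round _

lemma tentf_lip {n : ℕ} (hn : 0 < n) (y z : ℝ) : |tentf n z - tentf n y| ≤ |z - y| := by
  have hn' : (0:ℝ) < n := by positivity
  have aux : ∀ s t : ℝ, |s - round s| - |t - round t| ≤ |s - t| := by
    intro s t
    have h1 := round_le s (round t)
    have h2 := abs_sub_le s t (round t)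
    linarith
  have h1 := aux (n * y) (n * z)
  have h2 := aux (n * z) (n * y)
  have e : |(n:ℝ) * z - n * y| = n * |z - y| := by rw [← mul_sub, abs_mul, abs_of_pos hn']
  rw [abs_sub_comm ((n:ℝ) * y) (n * z), e] at h1
  rw [e] at h2
  unfold tentf
  rw [← sub_div, abs_div, abs_of_pos hn', div_le_iff₀ hn', abs_le]
  constructor <;> linarith

lemma tentf_zero (n : ℕ) : tentf n 0 = 0 := by simp [tentf]
lemma tentf_one (n : ℕ) : tentf n 1 = 0 := by simp [tentf]

lemma tentf_cont {n : ℕ} (hn : 0 < n) : Continuous (tentf n) := by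
  have : LipschitzWith 1 (tentf n) := LipschitzWith.of_dist_le_mul fun y z => by
    simpa [Real.dist_eq] using tentf_lip hn z y
  exact this.continuous

/-- the first halves of the cells -/
def Ehalf (n : ℕ) : Set ℝ := {y | Int.fract ((n:ℝ) * y) ≤ 1 / 2}

lemma Ehalf_meas (n : ℕ) : MeasurableSet (Ehalf n) :=
  measurableSet_le (measurable_fract.comp (measurable_const.mul measurable_id)) measurable_const

lemma tentf_first {n : ℕ} (hn : 0 < n) {y z : ℝ} (hy : y ∈ Ehalf n) (hz : z ∈ Ehalf n)
    (h : ⌊(n:ℝ) * y⌋ = ⌊(n:ℝ) * z⌋) : tentf n z - tentf n y = z - y := by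
  have hn' : (0:ℝ) < n := by positivity
  unfold Ehalf at hy hz
  rw [mem_ofPred_eq] at hy hz
  unfold tentf
  rw [abs_sub_round_eq_min, abs_sub_round_eq_min, min_eq_left (by linarith),
    min_eq_left (by linarith), ← Int.self_sub_floor, ← Int.self_sub_floor, h]
  field_simp; ring

lemma tentf_second {n : ℕ} (hn : 0 < n) {y z : ℝ} (hy : y ∉ Ehalf n) (hz : z ∉ Ehalf n)
    (h : ⌊(n:ℝ) * y⌋ = ⌊(n:ℝ) * z⌋) : tentf n z - tentf n y = -(z - y) := by
  have hn' : (0:ℝ) < n := by positivity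
  unfold Ehalf at hy hz
  rw [mem_ofPred_eq, not_le] at hy hz
  unfold tentf
  rw [abs_sub_round_eq_min, abs_sub_round_eq_min, min_eq_right (by linarith),
    min_eq_right (by linarith), ← Int.self_sub_floor, ← Int.self_sub_floor, h]
  field_simp; ring

/-- image of a piecewise Lipschitz map -/
lemma vol_image_le {n : ℕ} {h : ℝ → ℝ} {S : Set ℝ} (hS : MeasurableSet S) {c : ℝ}
    (hc : 0 ≤ c)
    (hl : ∀ y ∈ S, ∀ z ∈ S, ⌊(n:ℝ) * y⌋ = ⌊(n:ℝ) * z⌋ → |h z - h y| ≤ c * |z - y|) :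
    volume (h '' S) ≤ ENNReal.ofReal c * volume S := by
  set T : ℤ → Set ℝ := fun k => S ∩ {y | ⌊(n:ℝ) * y⌋ = k} with hT
  have hTm : ∀ k, MeasurableSet (T k) := fun k =>
    hS.inter ((Int.measurable_floor.comp (measurable_const.mul measurable_id))
      (measurableSet_singleton k))
  have hU : S = ⋃ k, T k := by
    ext y; simp [hT]
  have hdis : Pairwise (Function.onFun Disjoint T) := by
    intro k l hkl
    rw [Function.onFun, Set.disjoint_left]
    rintro y ⟨_, h1⟩ ⟨_, h2⟩
    exact hkl (h1.symm.trans h2)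
  calc volume (h '' S) = volume (⋃ k, h '' T k) := by
        conv_lhs => rw [hU, image_iUnion]
    _ ≤ ∑' k, volume (h '' T k) := measure_iUnion_le _
    _ ≤ ∑' k, ENNReal.ofReal c * volume (T k) := by
        refine ENNReal.tsum_le_tsum fun k => ?_
        have hlip : LipschitzOnWith (Real.toNNReal c) h (T k) :=
          LipschitzOnWith.of_dist_le_mul fun y hy z hz => by
            rw [Real.coe_toNNReal c hc, Real.dist_eq, Real.dist_eq]
            exact hl z hz.1 y hy.1 (by rw [hz.2, hy.2])
        have := hlip.hausdorffMeasure_image_le (d := 1) zero_le_one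
        rw [hausdorffMeasure_real, ENNReal.rpow_one] at this
        exact this
    _ = ENNReal.ofReal c * volume S := by
        rw [ENNReal.tsum_mul_left, ← measure_iUnion hdis hTm, ← hU]

/-- the cutoff function -/
def wcut (q η x : ℝ) : ℝ :=
  (1 / 2) * (1 - Real.smoothTransition (x / η)) + Real.smoothTransition ((x - q) / η)

lemma wcut_smooth (q η : ℝ) : ContDiff ℝ 1 (wcut q η) := by
  unfold wcut
  have h : ContDiff ℝ 1 Real.smoothTransition := Real.smoothTransition.contDiff (n := 1)
  have h1 : ContDiff ℝ 1 fun x : ℝ => Real.smoothTransition (x / η) :=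
    h.comp (contDiff_id.div_const _)
  have h2 : ContDiff ℝ 1 fun x : ℝ => Real.smoothTransition ((x - q) / η) :=
    h.comp ((contDiff_id.sub contDiff_const).div_const _)
  exact (contDiff_const.mul (contDiff_const.sub h1)).add h2

lemma wcut_zero {q η : ℝ} (hη : 0 < η) (hq : 0 < q) : wcut q η 0 = 1 / 2 := by
  unfold wcut
  rw [Real.smoothTransition.zero_of_nonpos (by simp),
    Real.smoothTransition.zero_of_nonpos (div_nonpos_of_nonpos_of_nonneg (by linarith) hη.le)]
  norm_num

lemma wcut_left {q η x : ℝ} (hη : 0 < η) (h1 : η ≤ x) (h2 : x ≤ q) : wcut q η x = 0 := by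
  unfold wcut
  rw [Real.smoothTransition.one_of_one_le (by rwa [one_le_div hη]),
    Real.smoothTransition.zero_of_nonpos (div_nonpos_of_nonpos_of_nonneg (by linarith) hη.le)]
  norm_num

lemma wcut_right {q η x : ℝ} (hη : 0 < η) (hq : η ≤ q) (h2 : q + η ≤ x) : wcut q η x = 1 := by
  unfold wcut
  rw [Real.smoothTransition.one_of_one_le (by rw [one_le_div hη]; linarith),
    Real.smoothTransition.one_of_one_le (by rw [one_le_div hη]; linarith)]
  norm_num

lemma wcut_mem {q η : ℝ} (hη : 0 < η) (hq : η ≤ q) (x : ℝ) : wcut q η x ∈ Icc (0:ℝ) 1 := by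
  have a1 := Real.smoothTransition.nonneg (x / η)
  have a2 := Real.smoothTransition.le_one (x / η)
  have b1 := Real.smoothTransition.nonneg ((x - q) / η)
  have b2 := Real.smoothTransition.le_one ((x - q) / η)
  rcases le_total x η with h | h
  · unfold wcut
    rw [Real.smoothTransition.zero_of_nonpos (x := (x - q) / η)
      (div_nonpos_of_nonpos_of_nonneg (by linarith) hη.le)]
    constructor <;> linarith
  · unfold wcut
    rw [Real.smoothTransition.one_of_one_le (x := x / η) (by rwa [one_le_div hη])]
    constructor <;> linarith

lemma Sm.abs_lip {A a l L : ℝ} {f fx : ℝ → ℝ → ℝ} (h : Sm β A a l L f fx) (hl : 0 < l) {x : ℝ}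
    (hx : x ∈ Icc (0:ℝ) 1) {y z : ℝ} (hy : y ∈ Icc (0:ℝ) 1) (hz : z ∈ Icc (0:ℝ) 1) :
    |f x z - f x y| ≤ L * |z - y| := by
  rcases lt_trichotomy y z with hlt | rfl | hlt
  · have h1 := h.lip x hx y hy z hz hlt
    have h2 : 0 < l * (z - y) := mul_pos hl (sub_pos.2 hlt)
    rw [abs_of_pos (sub_pos.2 hlt), abs_of_pos (by linarith)]; exact h1.2
  · simp
  · have h1 := h.lip x hx z hz y hy hlt
    have h2 : 0 < l * (y - z) := mul_pos hl (sub_pos.2 hlt)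
    rw [abs_sub_comm, abs_sub_comm z, abs_of_pos (sub_pos.2 hlt), abs_of_pos (by linarith)]
    exact h1.2

lemma Sm.cont {A a l L : ℝ} {f fx : ℝ → ℝ → ℝ} (h : Sm β A a l L f fx) (hl : 0 < l) (hL : 0 < L) :
    ContinuousOn (fun p : ℝ × ℝ => f p.1 p.2) (Icc 0 1 ×ˢ Icc 0 1) := by
  refine continuousOn_prod_of_continuousOn_lipschitzOnWith' (fun p : ℝ × ℝ => f p.1 p.2)
    (Real.toNNReal L) ?_ ?_
  · intro x hx
    refine LipschitzOnWith.of_dist_le_mul fun y hy z hz => ?_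
    rw [Real.coe_toNNReal L hL.le, Real.dist_eq, Real.dist_eq]
    exact h.abs_lip hl hx hz hy
  · intro y hy x hx
    exact (h.hasDeriv y hy x hx).continuousWithinAt



lemma conv_abs {w a b e : ℝ} (hw : w ∈ Icc (0:ℝ) 1) (ha : |a| ≤ e) (hb : |b| ≤ e) :
    |(1 - w) * a + w * b| ≤ e := by
  have h1 : 0 ≤ 1 - w := by linarith [hw.2]
  refine (abs_add_le _ _).trans ?_
  rw [abs_mul, abs_mul, abs_of_nonneg h1, abs_of_nonneg hw.1]
  have d1 := mul_le_mul_of_nonneg_left ha h1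
  have d2 := mul_le_mul_of_nonneg_left hb hw.1
  linarith

set_option maxHeartbeats 2000000 in
lemma perturb_step (hC : 1 < C) (hβ0 : 0 < β) (hβ : β < 1) {A a l L : ℝ} {f fx : ℝ → ℝ → ℝ}
    (hA : A < C) (ha : C⁻¹ < a) (hl : 0 < l) (hL : 0 < L) (h : Sm β A a l L f fx)
    {q η ε ε' : ℝ} (hη : 0 < η) (hq : η ≤ q) (hε : 0 < ε) (hε' : 0 < ε') :
    ∃ G : Fol C β, ∃ E : Set ℝ, MeasurableSet E ∧
      (∀ x ∈ Icc (0:ℝ) 1, ∀ y ∈ Icc (0:ℝ) 1, |G.f x y - f x y| ≤ ε) ∧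
      (∀ x ∈ Icc (0:ℝ) 1, ∀ y ∈ Icc (0:ℝ) 1, |G.fx x y - fx x y| ≤ ε) ∧
      (∀ x ∈ Icc (0:ℝ) 1, η ≤ x → x ≤ q → volume (G.f x '' (Icc 0 1 \ E)) ≤ ENNReal.ofReal ε') ∧
      (∀ x ∈ Icc (0:ℝ) 1, q + η ≤ x → volume (G.f x '' (Icc 0 1 ∩ E)) ≤ ENNReal.ofReal ε') := by
  have hC0 : 0 < C := by linarith
  have hq0 : 0 < q := by linarith
  -- the parameter κ
  set σ : ℝ := min (1 / 2) (ε' / L) with hσ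
  have hσ0 : 0 < σ := by positivity
  have hσ1 : σ ≤ 1 / 2 := min_le_left _ _
  have hσL : L * σ ≤ ε' := by
    have := min_le_right (1 / 2) (ε' / L)
    rw [← hσ, le_div_iff₀ hL] at this
    linarith
  set κ : ℝ := 1 - σ with hκ
  have hκ0 : 0 < κ := by linarith
  have hκ1 : κ ≤ 1 := by linarith
  obtain ⟨ε₀, hε₀, Hcl⟩ := holder_of_close hC hβ0 hβ hA ha (l := l * σ) (L := 2 * L)
    (by positivity) (by positivity)
  -- the cutoff
  have hw := wcut_smooth q η
  have hwd : ∀ x, HasDerivAt (wcut q η) (deriv (wcut q η) x) x := fun x =>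
    (hw.differentiable one_ne_zero x).hasDerivAt
  have hwdc : Continuous (deriv (wcut q η)) := hw.continuous_deriv le_rfl
  obtain ⟨W, hW⟩ := isCompact_Icc.exists_bound_of_continuousOn (s := Icc (0:ℝ) 1) hwdc.continuousOn
  have hW0 : 0 ≤ W := (norm_nonneg _).trans (hW 0 (by simp))
  have he : 0 < ε / 2 := by positivity
  obtain ⟨δ₁, hδ₁, hu⟩ := unif_y h.derivCont he
  obtain ⟨n', hn'⟩ := exists_nat_one_div_lt
    (lt_min (lt_min hδ₁ (show 0 < ε₀ / L by positivity))
      (lt_min (show 0 < ε / L by positivity) (show 0 < ε / (2 * L * (W + 1)) by positivity)))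
  set n : ℕ := n' + 1 with hndef
  have hn : 0 < n := Nat.succ_pos _
  have hnr : (0:ℝ) < n := by positivity
  have hnδ : 1 / (n:ℝ) < min (min δ₁ (ε₀ / L)) (min (ε / L) (ε / (2 * L * (W + 1)))) := by
    rw [hndef]; push_cast; exact hn'
  rw [lt_min_iff, lt_min_iff, lt_min_iff, lt_div_iff₀ hL, lt_div_iff₀ hL,
    lt_div_iff₀ (by positivity)] at hnδ
  obtain ⟨⟨hn1, hn2⟩, hn3, hn4⟩ := hnδ
  -- the reparametrisations
  have hT0 := tentf_nonneg n
  have hT1 : ∀ y, tentf n y ≤ 1 / n := fun y => (tentf_le hn y).trans (by gcongr; norm_num)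
  have hT2 : ∀ y, 2 * tentf n y ≤ 1 / n := fun y => by
    have := tentf_le hn y
    have e : (1:ℝ) / 2 / n = (1 / n) / 2 := by ring
    rw [e] at this; linarith
  set u : ℝ → ℝ := fun y => y + κ * tentf n y with hudef
  set v : ℝ → ℝ := fun y => y - κ * tentf n y with hvdef
  have hTl : ∀ y z, y < z → |κ * (tentf n z - tentf n y)| ≤ κ * (z - y) := by
    intro y z hyz
    have := tentf_lip hn y z
    rw [abs_of_pos (sub_pos.2 hyz)] at this
    rw [abs_mul, abs_of_pos hκ0]
    gcongr
  have hub : ∀ y z, y < z → σ * (z - y) ≤ u z - u y ∧ u z - u y ≤ 2 * (z - y) := by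
    intro y z hyz
    have h1 := abs_le.1 (hTl y z hyz)
    have : u z - u y = (z - y) + κ * (tentf n z - tentf n y) := by simp only [hudef]; ring
    rw [this, hκ] at *
    have h2 : 0 < z - y := sub_pos.2 hyz
    constructor <;> nlinarith [h1.1, h1.2]
  have hvb : ∀ y z, y < z → σ * (z - y) ≤ v z - v y ∧ v z - v y ≤ 2 * (z - y) := by
    intro y z hyz
    have h1 := abs_le.1 (hTl y z hyz)
    have : v z - v y = (z - y) - κ * (tentf n z - tentf n y) := by simp only [hvdef]; ring
    rw [this, hκ] at *
    have h2 : 0 < z - y := sub_pos.2 hyz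
    constructor <;> nlinarith [h1.1, h1.2]
  have hu0 : u 0 = 0 := by simp [hudef, tentf_zero]
  have hu1 : u 1 = 1 := by simp [hudef, tentf_one]
  have hv0 : v 0 = 0 := by simp [hvdef, tentf_zero]
  have hv1 : v 1 = 1 := by simp [hvdef, tentf_one]
  have mem_of : ∀ k : ℝ → ℝ, (∀ y z, y < z → σ * (z - y) ≤ k z - k y ∧ k z - k y ≤ 2 * (z - y)) →
      k 0 = 0 → k 1 = 1 → ∀ y ∈ Icc (0:ℝ) 1, k y ∈ Icc (0:ℝ) 1 := by
    intro k hk k0 k1 y hy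
    constructor
    · rcases hy.1.eq_or_lt with h0 | h0
      · rw [← h0, k0]
      · have := (hk 0 y h0).1
        have h2 : 0 < σ * (y - 0) := mul_pos hσ0 (by linarith)
        linarith
    · rcases hy.2.eq_or_lt with h0 | h0
      · rw [h0, k1]
      · have := (hk y 1 h0).1
        have h2 : 0 < σ * (1 - y) := mul_pos hσ0 (by linarith)
        linarith
  have hum := mem_of u hub hu0 hu1
  have hvm := mem_of v hvb hv0 hv1
  have huy : ∀ y, |u y - y| ≤ 1 / n := by
    intro y
    have : u y - y = κ * tentf n y := by simp only [hudef]; ring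
    rw [this, abs_of_nonneg (mul_nonneg hκ0.le (hT0 y))]
    exact (mul_le_of_le_one_left (hT0 y) hκ1).trans (hT1 y)
  have hvy : ∀ y, |v y - y| ≤ 1 / n := by
    intro y
    have : v y - y = -(κ * tentf n y) := by simp only [hvdef]; ring
    rw [this, abs_neg, abs_of_nonneg (mul_nonneg hκ0.le (hT0 y))]
    exact (mul_le_of_le_one_left (hT0 y) hκ1).trans (hT1 y)
  have hvu : ∀ y, |v y - u y| ≤ 1 / n := by
    intro y
    have : v y - u y = -(κ * (2 * tentf n y)) := by simp only [hvdef, hudef]; ring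
    have h0 : 0 ≤ 2 * tentf n y := by linarith [hT0 y]
    rw [this, abs_neg, abs_of_nonneg (mul_nonneg hκ0.le h0)]
    exact (mul_le_of_le_one_left h0 hκ1).trans (hT2 y)
  have huc : Continuous u := continuous_id.add (continuous_const.mul (tentf_cont hn))
  have hvc : Continuous v := continuous_id.sub (continuous_const.mul (tentf_cont hn))
  set w := wcut q η with hwdef
  have hwm : ∀ x, w x ∈ Icc (0:ℝ) 1 := wcut_mem hη hq
  set g : ℝ → ℝ → ℝ := fun x y => (1 - w x) * f x (u y) + w x * f x (v y) with hg
  set gx : ℝ → ℝ → ℝ := fun x y => deriv w x * (f x (v y) - f x (u y)) +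
    ((1 - w x) * fx x (u y) + w x * fx x (v y)) with hgx
  have fclose : ∀ x ∈ Icc (0:ℝ) 1, ∀ y ∈ Icc (0:ℝ) 1, |g x y - f x y| ≤ L * (1 / n) := by
    intro x hx y hy
    have b1 : |f x (u y) - f x y| ≤ L * (1 / n) := (h.abs_lip hl hx hy (hum y hy)).trans
      (mul_le_mul_of_nonneg_left (huy y) hL.le)
    have b2 : |f x (v y) - f x y| ≤ L * (1 / n) := (h.abs_lip hl hx hy (hvm y hy)).trans
      (mul_le_mul_of_nonneg_left (hvy y) hL.le)
    have b3 := hwm x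
    have e : g x y - f x y = (1 - w x) * (f x (u y) - f x y) + w x * (f x (v y) - f x y) := by
      simp only [hg]; ring
    rw [e]
    exact conv_abs b3 b1 b2
  have fxclose : ∀ x ∈ Icc (0:ℝ) 1, ∀ y ∈ Icc (0:ℝ) 1, |gx x y - fx x y| ≤ ε := by
    intro x hx y hy
    have b1 : |fx x (u y) - fx x y| ≤ ε / 2 := hu x hx y hy _ (hum y hy) ((huy y).trans_lt hn1)
    have b2 : |fx x (v y) - fx x y| ≤ ε / 2 := hu x hx y hy _ (hvm y hy) ((hvy y).trans_lt hn1)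
    have b0 : |f x (v y) - f x (u y)| ≤ L * (1 / n) :=
      (h.abs_lip hl hx (hum y hy) (hvm y hy)).trans (mul_le_mul_of_nonneg_left (hvu y) hL.le)
    have b3 := hwm x
    have b4 : |deriv w x * (f x (v y) - f x (u y))| ≤ ε / 2 := by
      rw [abs_mul]
      have c1 : |deriv w x| ≤ W := hW x hx
      calc |deriv w x| * |f x (v y) - f x (u y)| ≤ W * (L * (1 / n)) :=
            mul_le_mul c1 b0 (abs_nonneg _) hW0
        _ ≤ (W + 1) * (L * (1 / n)) := by gcongr; linarith
        _ = (1 / n) * (2 * L * (W + 1)) / 2 := by ring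
        _ ≤ ε / 2 := by linarith
    have e : gx x y - fx x y = deriv w x * (f x (v y) - f x (u y)) +
      ((1 - w x) * (fx x (u y) - fx x y) + w x * (fx x (v y) - fx x y)) := by
      simp only [hgx]; ring
    rw [e]
    have b5 := conv_abs b3 b1 b2
    refine (abs_add_le _ _).trans ?_
    linarith
  have glip : ∀ x ∈ Icc (0:ℝ) 1, ∀ y ∈ Icc (0:ℝ) 1, ∀ z ∈ Icc (0:ℝ) 1, y < z →
        l * σ * (z - y) ≤ g x z - g x y ∧ g x z - g x y ≤ 2 * L * (z - y) := by
    intro x hx y hy z hz hyz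
    have hd : 0 < z - y := sub_pos.2 hyz
    have hσd : 0 < σ * (z - y) := mul_pos hσ0 hd
    have u1 := hub y z hyz
    have v1 := hvb y z hyz
    have u2 := h.lip x hx (u y) (hum y hy) (u z) (hum z hz) (by linarith)
    have v2 := h.lip x hx (v y) (hvm y hy) (v z) (hvm z hz) (by linarith)
    have b3 := hwm x
    have u3 : l * σ * (z - y) ≤ f x (u z) - f x (u y) := by
      have := mul_le_mul_of_nonneg_left u1.1 hl.le
      linarith [u2.1]
    have v3 : l * σ * (z - y) ≤ f x (v z) - f x (v y) := by
      have := mul_le_mul_of_nonneg_left v1.1 hl.le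
      linarith [v2.1]
    have u4 : f x (u z) - f x (u y) ≤ 2 * L * (z - y) := by
      have := mul_le_mul_of_nonneg_left u1.2 hL.le
      linarith [u2.2]
    have v4 : f x (v z) - f x (v y) ≤ 2 * L * (z - y) := by
      have := mul_le_mul_of_nonneg_left v1.2 hL.le
      linarith [v2.2]
    have e : g x z - g x y = (1 - w x) * (f x (u z) - f x (u y)) +
        w x * (f x (v z) - f x (v y)) := by simp only [hg]; ring
    rw [e]
    have c1 : 0 ≤ 1 - w x := by linarith [b3.2]
    have c2 : 0 ≤ w x := b3.1
    have d1 := mul_le_mul_of_nonneg_left u3 c1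
    have d2 := mul_le_mul_of_nonneg_left v3 c2
    have d3 := mul_le_mul_of_nonneg_left u4 c1
    have d4 := mul_le_mul_of_nonneg_left v4 c2
    constructor <;> linarith
  have ghol : ∀ x ∈ Icc (0:ℝ) 1, ∀ y ∈ Icc (0:ℝ) 1, ∀ z ∈ Icc (0:ℝ) 1, y < z →
        C⁻¹ * (z - y) ^ (1 / β) ≤ g x z - g x y ∧ g x z - g x y ≤ C * (z - y) ^ β := by
    intro x hx
    refine Hcl (f x) (g x) (h.hol x hx) (fun y hy => (fclose x hx y hy).trans ?_) (glip x hx)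
    linarith
  have gpos : ∀ x ∈ Icc (0:ℝ) 1, ∀ y ∈ Icc (0:ℝ) 1, ∀ z ∈ Icc (0:ℝ) 1, y < z →
      0 < g x z - g x y := by
    intro x hx y hy z hz hyz
    have hd : 0 < z - y := sub_pos.2 hyz
    have := (glip x hx y hy z hz hyz).1
    have h2 : 0 < l * σ * (z - y) := by positivity
    linarith
  have gabs : ∀ x ∈ Icc (0:ℝ) 1, ∀ y ∈ Icc (0:ℝ) 1, ∀ z ∈ Icc (0:ℝ) 1, y ≠ z →
        C⁻¹ * |z - y| ^ (1 / β) ≤ |g x z - g x y| ∧ |g x z - g x y| ≤ C * |z - y| ^ β := by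
    intro x hx y hy z hz hne
    rcases lt_or_gt_of_ne hne with hlt | hlt
    · rw [abs_of_pos (sub_pos.2 hlt), abs_of_pos (gpos x hx y hy z hz hlt)]
      exact ghol x hx y hy z hz hlt
    · rw [abs_sub_comm, abs_sub_comm (g x z), abs_of_pos (sub_pos.2 hlt),
        abs_of_pos (gpos x hx z hz y hy hlt)]
      exact ghol x hx z hz y hy hlt
  have isF : IsFol C β g gx := by
    constructor
    · intro x hx y hy
      have a1 := h.mapsTo x hx _ (hum y hy)
      have a2 := h.mapsTo x hx _ (hvm y hy)
      have b3 := hwm x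
      have c1 : 0 ≤ 1 - w x := by linarith [b3.2]
      exact (convex_Icc (0:ℝ) 1) a1 a2 c1 b3.1 (by ring)
    · intro y hy x hx
      have d1 := h.hasDeriv _ (hum y hy) x hx
      have d2 := h.hasDeriv _ (hvm y hy) x hx
      have dw := (hwd x).hasDerivWithinAt (s := Icc (0:ℝ) 1)
      have := ((dw.const_sub 1).fun_mul d1).fun_add (dw.fun_mul d2)
      refine this.congr_deriv ?_
      change _ = deriv w x * (f x (v y) - f x (u y)) +
        ((1 - w x) * fx x (u y) + w x * fx x (v y))
      ring
    · have c0 := h.cont hl hL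
      have mu : MapsTo (fun p : ℝ × ℝ => (p.1, u p.2)) (Icc 0 1 ×ˢ Icc 0 1) (Icc 0 1 ×ˢ Icc 0 1) :=
        fun p hp => ⟨hp.1, hum _ hp.2⟩
      have mv : MapsTo (fun p : ℝ × ℝ => (p.1, v p.2)) (Icc 0 1 ×ˢ Icc 0 1) (Icc 0 1 ×ˢ Icc 0 1) :=
        fun p hp => ⟨hp.1, hvm _ hp.2⟩
      have cu : Continuous (fun p : ℝ × ℝ => (p.1, u p.2)) :=
        continuous_fst.prodMk (huc.comp continuous_snd)
      have cv : Continuous (fun p : ℝ × ℝ => (p.1, v p.2)) :=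
        continuous_fst.prodMk (hvc.comp continuous_snd)
      have f1 := c0.comp cu.continuousOn mu
      have f2 := c0.comp cv.continuousOn mv
      have g1 := h.derivCont.comp cu.continuousOn mu
      have g2 := h.derivCont.comp cv.continuousOn mv
      have w1 : Continuous (fun p : ℝ × ℝ => w p.1) := hw.continuous.comp continuous_fst
      have w2 : Continuous (fun p : ℝ × ℝ => deriv w p.1) := hwdc.comp continuous_fst
      exact (w2.continuousOn.mul (f2.sub f1)).add
        (((continuous_const.sub w1).continuousOn.mul g1).add (w1.continuousOn.mul g2))
    · intro y hy
      simp only [hg]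
      rw [h.eq_id _ (hum y hy), h.eq_id _ (hvm y hy), hwdef, wcut_zero hη hq0]
      simp only [hudef, hvdef]; ring
    · intro x hx
      simp only [hg, hu0, hv0, h.eq_bot x hx]; ring
    · intro x hx
      simp only [hg, hu1, hv1, h.eq_top x hx]; ring
    · intro x hx y hy z hz hne
      exact (gabs x hx y hy z hz hne).1
    · intro x hx y hy z hz hne
      exact (gabs x hx y hy z hz hne).2
  have fin : ∀ S : Set ℝ, S ⊆ Icc 0 1 → ENNReal.ofReal (L * σ) * volume S ≤ ENNReal.ofReal ε' := by
    intro S hS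
    have : volume S ≤ 1 := by
      have := measure_mono (μ := volume) hS
      rwa [Real.volume_Icc, sub_zero, ENNReal.ofReal_one] at this
    calc ENNReal.ofReal (L * σ) * volume S ≤ ENNReal.ofReal ε' * 1 := by gcongr
      _ = _ := mul_one _
  refine ⟨⟨g, gx, isF⟩, Ehalf n, Ehalf_meas n, ?_, fxclose, ?_, ?_⟩
  · intro x hx y hy
    refine (fclose x hx y hy).trans ?_
    linarith
  · intro x hx h1 h2
    refine (vol_image_le (n := n) (measurableSet_Icc.diff (Ehalf_meas n))
      (c := L * σ) (by positivity) ?_).trans (fin _ sdiff_subset)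
    intro y hy z hz hfl
    have e : ∀ y, g x y = f x (u y) := by
      intro y; simp only [hg]; rw [hwdef, wcut_left hη h1 h2]; ring
    simp only [e]
    refine (h.abs_lip hl hx (hum y hy.1) (hum z hz.1)).trans ?_
    have := tentf_second hn hy.2 hz.2 hfl
    have e2 : u z - u y = σ * (z - y) := by
      have : u z - u y = (z - y) + κ * (tentf n z - tentf n y) := by simp only [hudef]; ring
      rw [this, tentf_second hn hy.2 hz.2 hfl, hκ]; ring
    rw [e2, abs_mul, abs_of_pos hσ0, mul_assoc]
  · intro x hx h1
    refine (vol_image_le (n := n) (measurableSet_Icc.inter (Ehalf_meas n))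
      (c := L * σ) (by positivity) ?_).trans (fin _ inter_subset_left)
    intro y hy z hz hfl
    have e : ∀ y, g x y = f x (v y) := by
      intro y; simp only [hg]; rw [hwdef, wcut_right hη hq h1]; ring
    simp only [e]
    refine (h.abs_lip hl hx (hvm y hy.1) (hvm z hz.1)).trans ?_
    have e2 : v z - v y = σ * (z - y) := by
      have : v z - v y = (z - y) - κ * (tentf n z - tentf n y) := by simp only [hvdef]; ring
      rw [this, tentf_first hn hy.2 hz.2 hfl, hκ]; ring
    rw [e2, abs_mul, abs_of_pos hσ0, mul_assoc]


/-- measurable version of the projection -/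
def pit (F : Fol C β) : ℝ × ℝ → ℝ := MSq.indicator (projF F.f)

lemma MSq_closed : IsClosed MSq := by
  unfold MSq; exact isClosed_Icc.prod isClosed_Icc

lemma pit_measurable (hC : 1 < C) (hβ0 : 0 < β) (F : Fol C β) : Measurable (pit F) := by
  have h := F.isFol
  have hm : ∀ p ∈ MSq, pit F p ∈ Icc (0:ℝ) 1 := by
    intro p hp
    rw [pit, indicator_of_mem hp]
    exact hinv_mem hβ0 h hp.1 hp.2
  have hn : ∀ p ∉ MSq, pit F p = 0 := fun p hp => indicator_of_notMem hp _
  refine measurable_of_Iic fun a => ?_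
  rcases lt_or_ge a 0 with ha | ha
  · convert MeasurableSet.empty
    ext p
    simp only [mem_preimage, mem_Iic, mem_empty_iff_false, iff_false, not_le]
    by_cases hp : p ∈ MSq
    · exact ha.trans_le (hm p hp).1
    · rw [hn p hp]; exact ha
  rcases le_or_gt 1 a with ha1 | ha1
  · convert MeasurableSet.univ
    ext p
    simp only [mem_preimage, mem_Iic, mem_univ, iff_true]
    by_cases hp : p ∈ MSq
    · exact (hm p hp).2.trans ha1
    · rw [hn p hp]; exact ha
  have haI : a ∈ Icc (0:ℝ) 1 := ⟨ha, ha1.le⟩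
  have hcl : IsClosed {p ∈ MSq | p.2 ≤ F.f p.1 a} := by
    refine MSq_closed.isClosed_le continuous_snd.continuousOn ?_
    have hc : ContinuousOn (fun x => F.f x a) (Icc 0 1) := fun x hx =>
      (h.hasDeriv a haI x hx).continuousWithinAt
    exact hc.comp continuous_fst.continuousOn (fun p hp => hp.1)
  convert MSq_closed.measurableSet.compl.union hcl.measurableSet
  ext p
  by_cases hp : p ∈ MSq
  · have e : pit F p = hinv F.f p.1 p.2 := by rw [pit, indicator_of_mem hp]; rfl
    have h1 := hinv_eq hβ0 h hp.1 hp.2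
    have h2 := (fol_mono hC hβ0 h hp.1).le_iff_le (hinv_mem hβ0 h hp.1 hp.2) haI
    rw [h1] at h2
    simp [hp, e, h2]
  · simp [hp, hn p hp, ha]

lemma ae_mem_MSq : ∀ᵐ p ∂muM, p ∈ MSq := ae_restrict_mem MSq_closed.measurableSet

lemma pit_ae (F : Fol C β) : projF F.f =ᵐ[muM] pit F := by
  filter_upwards [ae_mem_MSq] with p hp
  rw [pit, indicator_of_mem hp]

lemma quotM_eq (F : Fol C β) : quotM F = muM.map (pit F) := Measure.map_congr (pit_ae F)

lemma muM_univ : muM univ = 1 := by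
  rw [muM, Measure.restrict_apply_univ, MSq, Measure.volume_eq_prod, Measure.prod_prod]
  simp [unitInterval]

instance : IsProbabilityMeasure muM := ⟨muM_univ⟩

/-- the defect functional -/
def Jd (F : Fol C β) (q : ℝ) (φ : ℝ → ℝ) : ℝ≥0∞ :=
  ∫⁻ p, ‖(if p.1 ≤ q then (1:ℝ) else 0) - φ (projF F.f p)‖ₑ ∂muM

/-- the open dense sets -/
def Gset (C β q : ℝ) (m : ℕ) : Set (Fol C β) :=
  {F | ∃ φ : ℝ → ℝ, Continuous φ ∧ HasCompactSupport φ ∧ Jd F q φ < ((m:ℝ≥0∞) + 1)⁻¹}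

lemma Gset_open (hC : 1 < C) (hα : 0 ≤ α) (hαβ : α < β) (hβ : β < 1) (q : ℝ) (m : ℕ) :
    IsOpenWrt (dalphaF α) (Gset C β q m) := by
  rintro F ⟨φ, hφ, hφc, hJ⟩
  obtain ⟨e, he0, he⟩ := ENNReal.lt_iff_exists_add_pos_lt.1 hJ
  have hu := hφc.uniformContinuous_of_continuous hφ
  obtain ⟨δ, hδ, hd⟩ := Metric.uniformContinuous_iff.1 hu (e:ℝ) (by exact_mod_cast he0)
  refine ⟨δ, hδ, fun G hG => ⟨φ, hφ, hφc, lt_of_le_of_lt ?_ he⟩⟩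
  calc Jd G q φ ≤ ∫⁻ p, (‖(if p.1 ≤ q then (1:ℝ) else 0) - φ (projF F.f p)‖ₑ + e) ∂muM := by
        refine lintegral_mono_ae ?_
        filter_upwards [ae_mem_MSq] with p hp
        have h1 := hinv_le_dalpha hC hα hαβ hβ F G hp.1 hp.2
        have h2 : dist (φ (projF G.f p)) (φ (projF F.f p)) < e :=
          hd (by rw [Real.dist_eq]; exact h1.trans_lt hG)
        have h3 : ‖φ (projF F.f p) - φ (projF G.f p)‖ₑ ≤ e := by
          rw [← edist_eq_enorm_sub, edist_comm, edist_dist]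
          refine (ENNReal.ofReal_le_ofReal h2.le).trans ?_
          simp
        calc _ = ‖((if p.1 ≤ q then (1:ℝ) else 0) - φ (projF F.f p)) +
              (φ (projF F.f p) - φ (projF G.f p))‖ₑ := by congr 1; ring
          _ ≤ _ := (enorm_add_le _ _).trans (by gcongr)
    _ = Jd F q φ + e := by
        rw [lintegral_add_right _ measurable_const]
        simp [Jd]

lemma Gset_dense (hC : 1 < C) (hα : 0 ≤ α) (hαβ : α < β) (hβ : β < 1) {q : ℝ} (hq : 0 < q)
    (m : ℕ) : IsDenseWrt (dalphaF α) (Gset C β q m) := by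
  intro F ε hε
  have hβ0 : 0 < β := by linarith
  obtain ⟨δ, hδ, hds⟩ := dalpha_small hC hα hαβ hβ hε
  obtain ⟨f, fx, A, a, l, L, hA, ha, hl, hL, hSm, hf1, hf2⟩ :=
    smooth_step hC hβ0 hβ F (half_pos hδ)
  set t : ℝ := 1 / (5 * (m + 1)) with ht
  have ht0 : 0 < t := by positivity
  set η : ℝ := min q t with hη
  have hη0 : 0 < η := lt_min hq ht0
  have hηt : η ≤ t := min_le_right _ _
  obtain ⟨G, E, hE, hG1, hG2, hE1, hE2⟩ := perturb_step hC hβ0 hβ hA ha hl hL hSm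
    (q := q) hη0 (min_le_left _ _) (half_pos hδ) ht0
  have h := G.isFol
  have hGF : dalphaF α G F < ε := by
    refine hds F G (fun x hx y hy => ?_) (fun x hx y hy => ?_)
    · have := abs_add_le (G.f x y - f x y) (f x y - F.f x y)
      have e : (G.f x y - f x y) + (f x y - F.f x y) = G.f x y - F.f x y := by ring
      rw [e] at this
      linarith [hG1 x hx y hy, hf1 x hx y hy]
    · have := abs_add_le (G.fx x y - fx x y) (fx x y - F.fx x y)
      have e : (G.fx x y - fx x y) + (fx x y - F.fx x y) = G.fx x y - F.fx x y := by ring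
      rw [e] at this
      linarith [hG2 x hx y hy, hf2 x hx y hy]
  have hpm := pit_measurable hC hβ0 G
  -- the bad set
  set B : Set (ℝ × ℝ) := MSq ∩ (({p | p.1 ≤ q} ∩ (pit G ⁻¹' E)ᶜ) ∪ ({p | p.1 ≤ q}ᶜ ∩ pit G ⁻¹' E))
    with hB
  have hIm : MeasurableSet {p : ℝ × ℝ | p.1 ≤ q} := measurableSet_le measurable_fst measurable_const
  have hBm : MeasurableSet B := MSq_closed.measurableSet.inter
    ((hIm.inter (hpm hE).compl).union (hIm.compl.inter (hpm hE)))
  have hslice : ∀ x, volume (Prod.mk x ⁻¹' B) ≤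
      (Icc 0 η).indicator (fun _ => 1) x + (Icc q (q + η)).indicator (fun _ => 1) x +
        (Icc (0:ℝ) 1).indicator (fun _ => ENNReal.ofReal t) x := by
    intro x
    have hsub : Prod.mk x ⁻¹' B ⊆ Icc 0 1 := fun z hz => hz.1.2
    have hle : volume (Prod.mk x ⁻¹' B) ≤ 1 := (measure_mono hsub).trans (by simp)
    by_cases hx : x ∈ Icc (0:ℝ) 1
    swap
    · have : Prod.mk x ⁻¹' B = ∅ := by
        ext z; simp only [mem_preimage, mem_empty_iff_false, iff_false]
        exact fun hz => hx hz.1.1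
      rw [this]; simp
    by_cases h1 : x ∈ Icc 0 η
    · rw [indicator_of_mem h1]
      exact hle.trans (by rw [add_assoc]; exact le_self_add)
    by_cases h2 : x ∈ Icc q (q + η)
    · rw [indicator_of_mem h2]
      exact hle.trans (by rw [add_right_comm]; exact le_add_self)
    rw [indicator_of_notMem h1, indicator_of_notMem h2, indicator_of_mem hx, zero_add, zero_add]
    have hpit : ∀ z ∈ Icc (0:ℝ) 1, pit G (x, z) = hinv G.f x z := by
      intro z hz
      rw [pit, indicator_of_mem (show (x, z) ∈ MSq from ⟨hx, hz⟩)]; rfl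
    have hηx : η ≤ x := by
      by_contra hc; exact h1 ⟨hx.1, (not_le.1 hc).le⟩
    by_cases hxq : x ≤ q
    · refine (measure_mono ?_).trans (hE1 x hx hηx hxq)
      intro z hz
      have hz1 := hz.1.2
      refine ⟨hinv G.f x z, ⟨hinv_mem hβ0 h hx hz1, ?_⟩, hinv_eq hβ0 h hx hz1⟩
      rcases hz.2 with hz2 | hz2
      · have := hz2.2
        rwa [mem_compl_iff, mem_preimage, hpit z hz1] at this
      · exact absurd hxq hz2.1
    · have hxq' : q + η ≤ x := by
        by_contra hc; exact h2 ⟨(not_le.1 hxq).le, (not_le.1 hc).le⟩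
      refine (measure_mono ?_).trans (hE2 x hx hxq')
      intro z hz
      have hz1 := hz.1.2
      refine ⟨hinv G.f x z, ⟨hinv_mem hβ0 h hx hz1, ?_⟩, hinv_eq hβ0 h hx hz1⟩
      rcases hz.2 with hz2 | hz2
      · exact absurd hz2.1 hxq
      · have := hz2.2
        rwa [mem_preimage, hpit z hz1] at this
  have hBv : muM B ≤ ENNReal.ofReal (3 * t) := by
    rw [muM, Measure.restrict_apply hBm, inter_eq_self_of_subset_left inter_subset_left,
      Measure.volume_eq_prod, Measure.prod_apply hBm]
    refine (lintegral_mono hslice).trans ?_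
    have hc : ∀ (u v : ℝ) (c : ℝ≥0∞), Measurable ((Icc u v).indicator fun _ => c) := fun u v c =>
      measurable_const.indicator measurableSet_Icc
    rw [lintegral_add_right _ (hc _ _ _), lintegral_add_right _ (hc _ _ _)]
    simp only [lintegral_indicator_const measurableSet_Icc, Real.volume_Icc, sub_zero, one_mul,
      add_sub_cancel_left, ENNReal.ofReal_one, mul_one]
    rw [← ENNReal.ofReal_add hη0.le hη0.le, ← ENNReal.ofReal_add (by positivity) ht0.le]
    exact ENNReal.ofReal_le_ofReal (by linarith)
  -- approximate the indicator of `E`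
  have : IsProbabilityMeasure (quotM G) := by
    rw [quotM_eq]; exact Measure.isProbabilityMeasure_map hpm.aemeasurable
  have hInt : Integrable (E.indicator fun _ => (1:ℝ)) (quotM G) :=
    (integrable_const _).indicator hE
  obtain ⟨φ, hφc, hφ1, hφ, -⟩ := hInt.exists_hasCompactSupport_lintegral_sub_le
    (ε := ENNReal.ofReal t) (by simpa using ht0)
  refine ⟨G, ⟨φ, hφ, hφc, ?_⟩, hGF⟩
  have hEm : Measurable (E.indicator fun _ => (1:ℝ)) := measurable_const.indicator hE
  have hmeas : Measurable fun y => ‖E.indicator (fun _ => (1:ℝ)) y - φ y‖ₑ :=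
    (hEm.sub hφ.measurable).enorm
  calc Jd G q φ ≤ ∫⁻ p, (B.indicator (fun _ => (1:ℝ≥0∞)) p +
        ‖E.indicator (fun _ => (1:ℝ)) (pit G p) - φ (pit G p)‖ₑ) ∂muM := by
        refine lintegral_mono_ae ?_
        filter_upwards [ae_mem_MSq, pit_ae G] with p hp hpp
        rw [hpp]
        have key : ‖(if p.1 ≤ q then (1:ℝ) else 0) - E.indicator (fun _ => (1:ℝ)) (pit G p)‖ₑ ≤
            B.indicator (fun _ => (1:ℝ≥0∞)) p := by
          by_cases h1 : p.1 ≤ q <;> by_cases h2 : pit G p ∈ E <;>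
            simp [h1, h2, hB, hp, indicator]
        calc _ = ‖((if p.1 ≤ q then (1:ℝ) else 0) - E.indicator (fun _ => (1:ℝ)) (pit G p)) +
              (E.indicator (fun _ => (1:ℝ)) (pit G p) - φ (pit G p))‖ₑ := by congr 1; ring
          _ ≤ _ := (enorm_add_le _ _).trans (by gcongr)
    _ = muM B + ∫⁻ y, ‖E.indicator (fun _ => (1:ℝ)) y - φ y‖ₑ ∂quotM G := by
        rw [lintegral_add_left (measurable_const.indicator hBm), lintegral_indicator_const hBm,
          one_mul, quotM_eq, lintegral_map hmeas hpm]
    _ ≤ ENNReal.ofReal (3 * t) + ENNReal.ofReal t := by gcongr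
    _ = ENNReal.ofReal (4 * t) := by
        rw [← ENNReal.ofReal_add (by positivity) ht0.le]; congr 1; ring
    _ < ENNReal.ofReal (1 / (m + 1)) := by
        rw [ENNReal.ofReal_lt_ofReal_iff (by positivity)]
        have : (1:ℝ) / (m + 1) = 5 * t := by rw [ht]; field_simp
        linarith
    _ = _ := by
        rw [one_div, ENNReal.ofReal_inv_of_pos (by positivity), ENNReal.ofReal_add (by positivity)
          zero_le_one]
        simp

lemma quot_ae_mem (hC : 1 < C) (hβ0 : 0 < β) (F : Fol C β) :
    ∀ᵐ y ∂quotM F, y ∈ Icc (0:ℝ) 1 := by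
  rw [quotM_eq]
  refine (ae_map_iff (p := fun y => y ∈ Icc (0:ℝ) 1) (pit_measurable hC hβ0 F).aemeasurable
    measurableSet_Icc).2 ?_
  filter_upwards [ae_mem_MSq] with p hp
  rw [pit, indicator_of_mem hp]
  exact hinv_mem hβ0 F.isFol hp.1 hp.2

lemma leaf_measurable (F : Fol C β) {y : ℝ} (hy : y ∈ Icc (0:ℝ) 1) : MeasurableSet (Leaf F y) := by
  refine IsCompact.measurableSet (isCompact_Icc.image_of_continuousOn ?_)
  exact continuousOn_id.prodMk fun x hx => (F.isFol.hasDeriv y hy x hx).continuousWithinAt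

lemma leaf_ae (F : Fol C β) {ν : ℝ → Measure (ℝ × ℝ)} (hν : IsDisint F ν) {y : ℝ}
    (hy : y ∈ Icc (0:ℝ) 1) (h1 : ν y (Leaf F y) = 1) : ∀ᵐ p ∂ν y, p ∈ Leaf F y := by
  have := hν.1 y
  exact (prob_compl_eq_zero_iff (leaf_measurable F hy)).2 h1

lemma min_le_Jd (hC : 1 < C) (hβ0 : 0 < β) (F : Fol C β) {ν : ℝ → Measure (ℝ × ℝ)}
    (hν : IsDisint F ν) (q : ℝ) {φ : ℝ → ℝ} (hφ : Continuous φ) :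
    ∫⁻ y, min (ν y {p | p.1 ≤ q}) (ν y {p | p.1 ≤ q}ᶜ) ∂quotM F ≤ Jd F q φ := by
  have hpm := pit_measurable hC hβ0 F
  have hIm : MeasurableSet {p : ℝ × ℝ | p.1 ≤ q} := measurableSet_le measurable_fst measurable_const
  have hνm : Measurable ν := Measure.measurable_of_measurable_coe _ hν.2.1
  have hbind : muM = (quotM F).bind ν := by
    ext E hE
    rw [Measure.bind_apply hE hνm.aemeasurable]
    exact hν.2.2.2 E hE
  set g : ℝ × ℝ → ℝ≥0∞ := fun p => ‖(if p.1 ≤ q then (1:ℝ) else 0) - φ (pit F p)‖ₑ with hg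
  have hgm : Measurable g := ((Measurable.ite hIm measurable_const measurable_const).sub
    (hφ.measurable.comp hpm)).enorm
  have hJ : Jd F q φ = ∫⁻ y, ∫⁻ p, g p ∂ν y ∂quotM F := by
    rw [← Measure.lintegral_bind hνm.aemeasurable hgm.aemeasurable, ← hbind]
    refine lintegral_congr_ae ?_
    filter_upwards [pit_ae F] with p hp
    rw [hp]
  rw [hJ]
  refine lintegral_mono_ae ?_
  filter_upwards [quot_ae_mem hC hβ0 F, hν.2.2.1] with y hy h1
  have hl := leaf_ae F hν hy h1
  have e : ∫⁻ p, g p ∂ν y = ∫⁻ p, ({p : ℝ × ℝ | p.1 ≤ q}.indicator (fun _ => ‖1 - φ y‖ₑ) p +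
      {p : ℝ × ℝ | p.1 ≤ q}ᶜ.indicator (fun _ => ‖φ y‖ₑ) p) ∂ν y := by
    refine lintegral_congr_ae ?_
    filter_upwards [hl] with p hp
    obtain ⟨x, hx, rfl⟩ := hp
    have hM : (x, F.f x y) ∈ MSq := ⟨hx, F.isFol.mapsTo x hx y hy⟩
    have : pit F (x, F.f x y) = y := by
      rw [pit, indicator_of_mem hM]
      exact hinv_left hC hβ0 F.isFol hx hy
    simp only [hg, this]
    by_cases hxq : x ≤ q <;> simp [hxq, indicator]
  rw [e, lintegral_add_left (measurable_const.indicator hIm), lintegral_indicator_const hIm,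
    lintegral_indicator_const hIm.compl]
  have h2 : 1 ≤ ‖1 - φ y‖ₑ + ‖φ y‖ₑ := by
    have := enorm_add_le (1 - φ y) (φ y)
    simpa using this
  calc _ = 1 * min (ν y {p | p.1 ≤ q}) (ν y {p | p.1 ≤ q}ᶜ) := (one_mul _).symm
    _ ≤ (‖1 - φ y‖ₑ + ‖φ y‖ₑ) * min (ν y {p | p.1 ≤ q}) (ν y {p | p.1 ≤ q}ᶜ) := by gcongr
    _ ≤ _ := by
      rw [add_mul]
      gcongr
      · exact min_le_left _ _
      · exact min_le_right _ _

lemma zero_one (hC : 1 < C) (hβ0 : 0 < β) (F : Fol C β) {ν : ℝ → Measure (ℝ × ℝ)}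
    (hν : IsDisint F ν) (q : ℝ) (hF : ∀ m, F ∈ Gset C β q m) :
    ∀ᵐ y ∂quotM F, ν y {p | p.1 ≤ q} = 0 ∨ ν y {p | p.1 ≤ q}ᶜ = 0 := by
  have hIm : MeasurableSet {p : ℝ × ℝ | p.1 ≤ q} := measurableSet_le measurable_fst measurable_const
  have h0 : ∫⁻ y, min (ν y {p | p.1 ≤ q}) (ν y {p | p.1 ≤ q}ᶜ) ∂quotM F = 0 := by
    by_contra hne
    obtain ⟨n, hn⟩ := ENNReal.exists_inv_nat_lt hne
    obtain ⟨φ, hφ, -, hJ⟩ := hF n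
    have h1 := (min_le_Jd hC hβ0 F hν q hφ).trans_lt hJ
    have h2 : ((n:ℝ≥0∞) + 1)⁻¹ ≤ (n:ℝ≥0∞)⁻¹ := ENNReal.inv_le_inv.2 le_self_add
    exact absurd (h1.trans_le h2) hn.not_gt
  rw [lintegral_eq_zero_iff ((hν.2.1 _ hIm).min (hν.2.1 _ hIm.compl))] at h0
  filter_upwards [h0] with y hy
  have hy' : min (ν y {p | p.1 ≤ q}) (ν y {p | p.1 ≤ q}ᶜ) = 0 := hy
  rcases min_choice (ν y {p | p.1 ≤ q}) (ν y {p | p.1 ≤ q}ᶜ) with h | h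
  · left; rw [← h, hy']
  · right; rw [← h, hy']

lemma dirac_of_zero_one (F : Fol C β) {ν : ℝ → Measure (ℝ × ℝ)}
    (hν : IsDisint F ν) {y : ℝ} (hy : y ∈ Icc (0:ℝ) 1) (h1 : ν y (Leaf F y) = 1)
    (hz : ∀ q : ℚ, 0 < q → q < 1 →
      ν y {p | p.1 ≤ (q:ℝ)} = 0 ∨ ν y {p | p.1 ≤ (q:ℝ)}ᶜ = 0) :
    ∃ x ∈ unitInterval, ν y = Measure.dirac (x, F.f x y) := by
  have hP := hν.1 y
  have hl := leaf_ae F hν hy h1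
  set S : Set ℝ := {r | ∃ q : ℚ, 0 < q ∧ q < 1 ∧ (q:ℝ) = r ∧ ν y {p | p.1 ≤ (q:ℝ)}ᶜ = 0} ∪ {1}
    with hS
  have hSb : BddBelow S := by
    refine ⟨0, ?_⟩
    rintro r (⟨q, hq, -, rfl, -⟩ | rfl)
    · exact_mod_cast hq.le
    · exact zero_le_one
  have hSn : S.Nonempty := ⟨1, Or.inr rfl⟩
  set x₀ := sInf S with hx₀
  have hx1 : x₀ ≤ 1 := csInf_le hSb (Or.inr rfl)
  have hx0 : 0 ≤ x₀ := by
    refine le_csInf hSn ?_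
    rintro r (⟨q, hq, -, rfl, -⟩ | rfl)
    · exact_mod_cast hq.le
    · exact zero_le_one
  have hae : ∀ᵐ p ∂ν y, ∀ q : ℚ, 0 < q → q < 1 →
      (((q:ℝ) < x₀ → ¬ p.1 ≤ (q:ℝ)) ∧ (x₀ < (q:ℝ) → p.1 ≤ (q:ℝ))) := by
    rw [ae_all_iff]
    intro q
    by_cases hq0 : 0 < q
    swap
    · exact Eventually.of_forall fun p hq => absurd hq hq0
    by_cases hq1 : q < 1
    swap
    · exact Eventually.of_forall fun p _ hq => absurd hq hq1
    rcases hz q hq0 hq1 with h | h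
    · have hn : ∀ᵐ p ∂ν y, ¬ p.1 ≤ (q:ℝ) := measure_eq_zero_iff_ae_notMem.1 h
      have hxq : (q:ℝ) ≤ x₀ := by
        refine le_csInf hSn ?_
        rintro r (⟨q', hq', -, rfl, hq'n⟩ | rfl)
        · by_contra hlt
          have h3 : {p : ℝ × ℝ | p.1 ≤ (q':ℝ)} ⊆ {p | p.1 ≤ (q:ℝ)} :=
            fun p (hp : p.1 ≤ (q':ℝ)) => hp.trans (not_le.1 hlt).le
          have h4 := measure_mono_null h3 h
          have h5 := measure_union_null h4 hq'n
          rw [union_compl_self, measure_univ] at h5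
          exact one_ne_zero h5
        · exact_mod_cast hq1.le
      filter_upwards [hn] with p hp _ _
      exact ⟨fun _ => hp, fun hh => absurd hh hxq.not_gt⟩
    · have hn : ∀ᵐ p ∂ν y, p.1 ≤ (q:ℝ) := h
      have hxq : x₀ ≤ (q:ℝ) := csInf_le hSb (Or.inl ⟨q, hq0, hq1, rfl, h⟩)
      filter_upwards [hn] with p hp _ _
      exact ⟨fun hh => absurd hh hxq.not_gt, fun _ => hp⟩
  refine ⟨x₀, ⟨hx0, hx1⟩, ?_⟩
  have hfin : ∀ᵐ p ∂ν y, p = (x₀, F.f x₀ y) := by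
    filter_upwards [hae, hl] with p hp hpl
    obtain ⟨x, hx, rfl⟩ := hpl
    have : x = x₀ := by
      rcases lt_trichotomy x x₀ with h | h | h
      · obtain ⟨q, hq1, hq2⟩ := exists_rat_btwn h
        have a0 : (0:ℝ) < q := hx.1.trans_lt hq1
        have a1 : (q:ℝ) < 1 := hq2.trans_le hx1
        exact absurd hq1.le ((hp q (by exact_mod_cast a0) (by exact_mod_cast a1)).1 hq2)
      · exact h
      · obtain ⟨q, hq1, hq2⟩ := exists_rat_btwn h
        have a0 : (0:ℝ) < q := hx0.trans_lt hq1
        have a1 : (q:ℝ) < 1 := hq2.trans_le hx.2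
        exact absurd ((hp q (by exact_mod_cast a0) (by exact_mod_cast a1)).2 hq1) hq2.not_ge
    rw [this]
  have hmap : (ν y).map id = (ν y).map (fun _ => (x₀, F.f x₀ y)) := Measure.map_congr hfin
  rw [Measure.map_id, Measure.map_const, measure_univ, one_smul] at hmap
  exact hmap

end helpers

/-- There is a residual subset `R` of `(F_(C,β), d_α)` such that for every
`f ∈ R`, for `μ̂`-almost every `y` the conditional measure `μ_y` of the Rokhlin disintegration
is a Dirac measure `δ_{(x_y, f(x_y, y))}` for some `x_y ∈ [0,1]`. -/
theorem stmt0 (C β α : ℝ) (hC : 1 < C) (hα : 0 ≤ α) (hαβ : α < β) (hβ : β < 1) :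
    ∃ R : Set (Fol C β),
      (∃ G : ℕ → Set (Fol C β),
        (∀ n, IsOpenWrt (dalphaF α) (G n) ∧ IsDenseWrt (dalphaF α) (G n)) ∧
        (⋂ n, G n) ⊆ R) ∧
      ∀ F ∈ R, ∀ ν : ℝ → Measure (ℝ × ℝ), IsDisint F ν →
        ∀ᵐ y ∂quotM F, ∃ x ∈ unitInterval, ν y = Measure.dirac (x, F.f x y) := by
  have hβ0 : 0 < β := by linarith
  have : Nonempty {q : ℚ // 0 < q ∧ q < 1} := ⟨⟨1 / 2, by norm_num, by norm_num⟩⟩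
  obtain ⟨e, he⟩ := exists_surjective_nat ({q : ℚ // 0 < q ∧ q < 1} × ℕ)
  refine ⟨⋂ n, Gset C β ((e n).1.1 : ℝ) (e n).2,
    ⟨fun n => Gset C β ((e n).1.1 : ℝ) (e n).2, fun n => ⟨?_, ?_⟩, subset_rfl⟩, ?_⟩
  · exact Gset_open hC hα hαβ hβ _ _
  · exact Gset_dense hC hα hαβ hβ (by exact_mod_cast (e n).1.2.1) _
  intro F hF ν hν
  have hall : ∀ q : ℚ, ∀ᵐ y ∂quotM F, 0 < q → q < 1 →
      (ν y {p | p.1 ≤ (q:ℝ)} = 0 ∨ ν y {p | p.1 ≤ (q:ℝ)}ᶜ = 0) := by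
    intro q
    by_cases hq : 0 < q ∧ q < 1
    · have hm : ∀ m, F ∈ Gset C β (q:ℝ) m := by
        intro m
        obtain ⟨n, hn⟩ := he (⟨q, hq⟩, m)
        have := mem_iInter.1 hF n
        rw [hn] at this
        exact this
      filter_upwards [zero_one hC hβ0 F hν q hm] with y hy _ _
      exact hy
    · exact Eventually.of_forall fun y h0 h1 => absurd ⟨h0, h1⟩ hq
  filter_upwards [quot_ae_mem hC hβ0 F, hν.2.2.1, ae_all_iff.2 hall] with y hy h1 hz
  exact dirac_of_zero_one F hν hy h1 hz

end
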